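/- (Lemma 2: asymptotic estimate for first derivatives of the rescaled functions.) Under the blow-up setup, assume in addition that v_i converges in C²_loc(ℝ²) to a function u₀ satisfying −Δu₀ = V(0) e^{u₀} in ℝ², where V(0) = lim_i V_i(x_i) > 0. Then for all ε > 0 and ε' ∈ (0, 1/4) there exist k = k(ε, ε') > 0, an index i₀ = i₀(ε, ε') ∈ ℕ, and a constant C > 0 such that for all i ≥ i₀, all j ∈ {1, 2}, and all θ with k ≤ |θ| ≤ δ_i ε' / r_i, one has |∂_j v_i(θ) − ∂_j u₀(θ)| ≤ ε/|θ| + C (r_i/δ_i). -/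

import Mathlib

open MeasureTheory Filter Metric


abbrev E2 := EuclideanSpace ℝ (Fin 2)

noncomputable def pd (j : Fin 2) (u : E2 → ℝ) (x : E2) : ℝ :=
  fderiv ℝ u x (EuclideanSpace.single j 1)

noncomputable def lapl (u : E2 → ℝ) (x : E2) : ℝ :=
  pd 0 (pd 0 u) x + pd 1 (pd 1 u) x

theorem fderiv_eq_sum_pd (f : E2 → ℝ) (x h : E2) :
    fderiv ℝ f x h = h 0 * pd 0 f x + h 1 * pd 1 f x := by
  have : h = h 0 • EuclideanSpace.single (0 : Fin 2) (1:ℝ) + h 1 • EuclideanSpace.single (1 : Fin 2) (1:ℝ) := by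
    ext i; fin_cases i <;> simp
  conv_lhs => rw [this]
  simp [pd]

theorem pd_contDiff {f : E2 → ℝ} (hf : ContDiff ℝ 2 f) (j : Fin 2) : ContDiff ℝ 1 (pd j f) := by
  have : ContDiff ℝ 1 (fderiv ℝ f) := hf.fderiv_right (by norm_num)
  exact this.clm_apply contDiff_const

theorem pd_continuous {f : E2 → ℝ} (hf : ContDiff ℝ 1 f) (j : Fin 2) : Continuous (pd j f) := by
  have : Continuous (fderiv ℝ f) := hf.continuous_fderiv (by norm_num)
  exact this.clm_apply continuous_const

theorem pd2_continuous {f : E2 → ℝ} (hf : ContDiff ℝ 2 f) (j k : Fin 2) : Continuous (pd k (pd j f)) :=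
  pd_continuous (pd_contDiff hf j) k

theorem lapl_continuous {f : E2 → ℝ} (hf : ContDiff ℝ 2 f) : Continuous (lapl f) :=
  (pd2_continuous hf 0 0).add (pd2_continuous hf 1 1)

theorem pd_pd_eq {f : E2 → ℝ} {x : E2} (hf : ContDiffAt ℝ 2 f x) (j k : Fin 2) :
    pd k (pd j f) x = fderiv ℝ (fderiv ℝ f) x (EuclideanSpace.single k 1) (EuclideanSpace.single j 1) := by
  have h : DifferentiableAt ℝ (fderiv ℝ f) x :=
    (hf.fderiv_right (m := 1) (by norm_num)).differentiableAt (by norm_num)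
  unfold pd
  rw [fderiv_clm_apply h (differentiableAt_const _)]
  simp

theorem pd_comm {f : E2 → ℝ} {x : E2} (hf : ContDiffAt ℝ 2 f x) (j k : Fin 2) :
    pd k (pd j f) x = pd j (pd k f) x := by
  rw [pd_pd_eq hf, pd_pd_eq hf]
  exact (hf.isSymmSndFDerivAt (by simp)).eq _ _

theorem hasDerivAt_comp_pd {f : E2 → ℝ} {c : ℝ → E2} {c' : E2} {t : ℝ} (hf : DifferentiableAt ℝ f (c t))
    (hc : HasDerivAt c c' t) :
    HasDerivAt (fun t => f (c t)) (c' 0 * pd 0 f (c t) + c' 1 * pd 1 f (c t)) t := by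
  rw [← fderiv_eq_sum_pd]
  exact hf.hasFDerivAt.comp_hasDerivAt t hc

theorem lapl_neg (f : E2 → ℝ) (x : E2) : lapl (fun y => - f y) x = - lapl f x := by
  have h : ∀ (j : Fin 2) (g : E2 → ℝ), pd j (fun y => - g y) = fun y => - pd j g y := by
    intro j g; ext y; simp [pd, fderiv_fun_neg]
  simp only [lapl, h]; ring

theorem pd_congr {f g : E2 → ℝ} {x : E2} (h : f =ᶠ[nhds x] g) (j : Fin 2) : pd j f =ᶠ[nhds x] pd j g := by
  filter_upwards [h.fderiv (𝕜 := ℝ)] with y hy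
  simp [pd, hy]

theorem lapl_congr {f g : E2 → ℝ} {x : E2} (h : f =ᶠ[nhds x] g) : lapl f =ᶠ[nhds x] lapl g := by
  filter_upwards [pd_congr (pd_congr h 0) 0, pd_congr (pd_congr h 1) 1] with y h1 h2
  simp [lapl, h1, h2]

/-- affine rescaling -/
theorem pd_comp_affine (f : E2 → ℝ) (a : E2) (R c : ℝ) (hR : R ≠ 0) (j : Fin 2) (x : E2) :
    pd j (fun y => f (a + R • y) + c) x = R * pd j f (a + R • x) := by
  have h1 : fderiv ℝ (fun y => f (a + R • y) + c) x = fderiv ℝ (fun y => f (a + R • y)) x := by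
    rw [fderiv_add_const]
  unfold pd
  rw [h1]
  by_cases hd : DifferentiableAt ℝ f (a + R • x)
  · have hc : HasFDerivAt (fun y : E2 => a + R • y) (R • ContinuousLinearMap.id ℝ E2) x :=
      ((hasFDerivAt_id x).const_smul R).const_add a
    have := hd.hasFDerivAt.comp x hc
    have e := this.fderiv
    simp only [Function.comp_def] at e
    rw [e]; simp
  · have hd2 : ¬ DifferentiableAt ℝ (fun y => f (a + R • y)) x := by
      intro hh
      apply hd
      have hx : x = R⁻¹ • ((a + R • x) - a) := by
        rw [add_sub_cancel_left, smul_smul, inv_mul_cancel₀ hR, one_smul]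
      have hi : DifferentiableAt ℝ (fun w : E2 => R⁻¹ • (w - a)) (a + R • x) := by fun_prop
      rw [hx] at hh
      have := hh.comp (a + R • x) hi
      refine this.congr_of_eventuallyEq (Eventually.of_forall fun w => ?_)
      simp only [Function.comp_def]
      rw [smul_smul, mul_inv_cancel₀ hR, one_smul, add_sub_cancel]
    rw [fderiv_zero_of_not_differentiableAt hd, fderiv_zero_of_not_differentiableAt hd2]; simp

theorem lapl_comp_affine (f : E2 → ℝ) (a : E2) (R c : ℝ) (hR : R ≠ 0) (x : E2) :
    lapl (fun y => f (a + R • y) + c) x = R ^ 2 * lapl f (a + R • x) := by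
  have h : ∀ j, pd j (pd j (fun y => f (a + R • y) + c)) x = R ^ 2 * pd j (pd j f) (a + R • x) := by
    intro j
    have h1 : pd j (fun y => f (a + R • y) + c) = fun y => (fun w => R * pd j f w) (a + R • y) + 0 := by
      ext y; rw [pd_comp_affine f a R c hR]; simp
    rw [h1, pd_comp_affine (fun w => R * pd j f w) a R 0 hR]
    have : pd j (fun w => R * pd j f w) (a + R • x) = R * pd j (pd j f) (a + R • x) := by
      have := fderiv_const_smul_field (𝕜 := ℝ) (f := pd j f) R
      have e : (fun w => R * pd j f w) = R • pd j f := rfl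
      rw [e]
      change fderiv ℝ (R • pd j f) _ _ = _
      rw [this]; rfl
    rw [this]; ring
  simp only [lapl, h]; ring

/-- unit direction -/
noncomputable def ev (φ : ℝ) : E2 := !₂[Real.cos φ, Real.sin φ]
noncomputable def ep (φ : ℝ) : E2 := !₂[-Real.sin φ, Real.cos φ]

@[simp] theorem ev_zero (φ : ℝ) : ev φ 0 = Real.cos φ := by simp [ev]
@[simp] theorem ev_one (φ : ℝ) : ev φ 1 = Real.sin φ := by simp [ev]
@[simp] theorem ep_zero (φ : ℝ) : ep φ 0 = -Real.sin φ := by simp [ep]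
@[simp] theorem ep_one (φ : ℝ) : ep φ 1 = Real.cos φ := by simp [ep]

@[simp] theorem norm_ev (φ : ℝ) : ‖ev φ‖ = 1 := by
  rw [EuclideanSpace.norm_eq]; simp [Fin.sum_univ_two]

theorem hasDerivAt_ev (φ : ℝ) : HasDerivAt ev (ep φ) φ := by
  have h := ((Real.hasDerivAt_cos φ).smul_const (EuclideanSpace.single (0 : Fin 2) (1:ℝ))).fun_add
    ((Real.hasDerivAt_sin φ).smul_const (EuclideanSpace.single (1 : Fin 2) (1:ℝ)))
  have e1 : ev = fun φ => Real.cos φ • EuclideanSpace.single (0 : Fin 2) (1:ℝ) + Real.sin φ • EuclideanSpace.single (1 : Fin 2) (1:ℝ) := by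
    ext φ i; fin_cases i <;> simp [ev]
  rw [e1]
  refine h.congr_deriv ?_
  ext i; fin_cases i <;> simp [ep]

theorem hasDerivAt_ep (φ : ℝ) : HasDerivAt ep (-ev φ) φ := by
  have h := ((Real.hasDerivAt_sin φ).fun_neg.smul_const (EuclideanSpace.single (0 : Fin 2) (1:ℝ))).fun_add
    ((Real.hasDerivAt_cos φ).smul_const (EuclideanSpace.single (1 : Fin 2) (1:ℝ)))
  have e1 : ep = fun φ => (-Real.sin φ) • EuclideanSpace.single (0 : Fin 2) (1:ℝ) + Real.cos φ • EuclideanSpace.single (1 : Fin 2) (1:ℝ) := by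
    ext φ i; fin_cases i <;> simp [ep]
  rw [e1]
  refine h.congr_deriv ?_
  ext i; fin_cases i <;> simp [ev]

theorem ev_continuous : Continuous ev := continuous_iff_continuousAt.2 fun φ => (hasDerivAt_ev φ).continuousAt
theorem ep_continuous : Continuous ep := continuous_iff_continuousAt.2 fun φ => (hasDerivAt_ep φ).continuousAt

theorem norm_smul_ev {r : ℝ} (hr : 0 ≤ r) (φ : ℝ) : ‖r • ev φ‖ = r := by
  rw [norm_smul, norm_ev]; simp [abs_of_nonneg hr]

theorem polar_integral (f : E2 → ℝ) :
    ∫ y, f y = ∫ p in polarCoord.target, p.1 * f (p.1 • ev p.2) := by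
  have h1 := (PiLp.volume_preserving_toLp (Fin 2)).integral_comp
    (MeasurableEquiv.toLp 2 (Fin 2 → ℝ)).measurableEmbedding f
  have h2 := (volume_preserving_finTwoArrow ℝ).symm.integral_comp
    (MeasurableEquiv.finTwoArrow (α := ℝ)).symm.measurableEmbedding (fun y : Fin 2 → ℝ => f (WithLp.toLp 2 y))
  rw [← h1, ← h2, ← integral_comp_polarCoord_symm]
  congr 1
  ext p
  simp only [smul_eq_mul]
  congr 2
  ext i; fin_cases i <;> simp [ev, MeasurableEquiv.finTwoArrow]

theorem polar_integral_iter (f : E2 → ℝ)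
    (hf : IntegrableOn (fun p : ℝ × ℝ => p.1 * f (p.1 • ev p.2)) (Set.Ioi 0 ×ˢ Set.Ioo (-Real.pi) Real.pi)) :
    ∫ y, f y = ∫ r in Set.Ioi (0:ℝ), r * ∫ φ in (-Real.pi)..Real.pi, f (r • ev φ) := by
  rw [polar_integral, polarCoord_target]
  rw [Measure.volume_eq_prod] at hf ⊢
  rw [setIntegral_prod _ hf]
  refine integral_congr_ae (Eventually.of_forall fun r => ?_)
  simp only
  rw [intervalIntegral.integral_of_le (by linarith [Real.pi_pos]), integral_Ioc_eq_integral_Ioo,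
    integral_const_mul]

theorem hasDerivAt_param {G G' : ℝ → ℝ → ℝ} (hG : Continuous (Function.uncurry G))
    (hG' : Continuous (Function.uncurry G')) (hd : ∀ r φ, HasDerivAt (fun r => G r φ) (G' r φ) r)
    (a b r : ℝ) :
    HasDerivAt (fun r => ∫ φ in a..b, G r φ) (∫ φ in a..b, G' r φ) r := by
  obtain ⟨M, hM⟩ := ((isCompact_Icc (a := r-1) (b := r+1)).prod
    (isCompact_uIcc (a := a) (b := b))).exists_bound_of_continuousOn (f := Function.uncurry G') hG'.continuousOn
  have := intervalIntegral.hasDerivAt_integral_of_dominated_loc_of_deriv_le (𝕜 := ℝ) (μ := volume)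
    (F := G) (F' := G') (x₀ := r) (s := Set.Icc (r-1) (r+1)) (a := a) (b := b) (bound := fun _ => M)
    (Icc_mem_nhds (by linarith) (by linarith))
    (Eventually.of_forall fun t => (hG.comp (by fun_prop : Continuous fun φ => (t, φ))).aestronglyMeasurable)
    ((hG.comp (by fun_prop : Continuous fun φ => (r, φ))).intervalIntegrable _ _)
    ((hG'.comp (by fun_prop : Continuous fun φ => (r, φ))).aestronglyMeasurable)
    (Eventually.of_forall fun φ hφ t ht => hM (t, φ) ⟨ht, Set.uIoc_subset_uIcc hφ⟩)
    (by simp) (Eventually.of_forall fun φ hφ t ht => hd t φ)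
  exact this.2

/-- circle integral -/
noncomputable def cm (z : E2 → ℝ) (x : E2) (r : ℝ) : ℝ := ∫ φ in (-Real.pi)..Real.pi, z (x + r • ev φ)
noncomputable def cp (z : E2 → ℝ) (x : E2) (r : ℝ) : ℝ := ∫ φ in (-Real.pi)..Real.pi,
  (ev φ 0 * pd 0 z (x + r • ev φ) + ev φ 1 * pd 1 z (x + r • ev φ))

theorem cont_polar (x : E2) : Continuous (fun p : ℝ × ℝ => x + p.1 • ev p.2) := by
  have := ev_continuous
  fun_prop

theorem hasDerivAt_ray (x : E2) (r φ : ℝ) : HasDerivAt (fun r : ℝ => x + r • ev φ) (ev φ) r := by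
  simpa using ((hasDerivAt_id r).smul_const (ev φ)).const_add x

theorem hasDerivAt_circ (x : E2) (r φ : ℝ) : HasDerivAt (fun φ : ℝ => x + r • ev φ) (r • ep φ) φ :=
  ((hasDerivAt_ev φ).const_smul r).const_add x

theorem cm_hasDerivAt {z : E2 → ℝ} (hz : ContDiff ℝ 1 z) (x : E2) (r : ℝ) :
    HasDerivAt (cm z x) (cp z x r) r := by
  have c0 := pd_continuous hz 0
  have c1 := pd_continuous hz 1
  have cP := cont_polar x
  refine hasDerivAt_param (G := fun r φ => z (x + r • ev φ))
    (G' := fun r φ => (ev φ 0 * pd 0 z (x + r • ev φ) + ev φ 1 * pd 1 z (x + r • ev φ))) ?_ ?_ ?_ _ _ _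
  · exact hz.continuous.comp cP
  · have e0 : Continuous fun p : ℝ × ℝ => Real.cos p.2 := by fun_prop
    have e1 : Continuous fun p : ℝ × ℝ => Real.sin p.2 := by fun_prop
    simp only [ev_zero, ev_one]
    exact (e0.mul (c0.comp cP)).add (e1.mul (c1.comp cP))
  · intro r φ
    exact hasDerivAt_comp_pd (hz.differentiable (by norm_num) _) (hasDerivAt_ray x r φ)

theorem cp_eq {z : E2 → ℝ} (hz : ContDiff ℝ 2 z) (x : E2) (r : ℝ) :
    cp z x r = r * ∫ φ in (-Real.pi)..Real.pi,
      (Real.sin φ ^ 2 * pd 0 (pd 0 z) (x + r • ev φ) - 2 * (Real.sin φ * Real.cos φ) * pd 0 (pd 1 z) (x + r • ev φ)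
        + Real.cos φ ^ 2 * pd 1 (pd 1 z) (x + r • ev φ)) := by
  have cP : Continuous (fun φ : ℝ => x + r • ev φ) := by have := ev_continuous; fun_prop
  have c0 := (pd_contDiff hz 0).continuous.comp cP
  have c1 := (pd_contDiff hz 1).continuous.comp cP
  have c00 := (pd2_continuous hz 0 0).comp cP
  have c01 := (pd2_continuous hz 1 0).comp cP
  have c11 := (pd2_continuous hz 1 1).comp cP
  simp only [Function.comp_def] at c0 c1 c00 c01 c11
  have hd : ∀ φ, HasDerivAt (fun φ => (-Real.sin φ) * pd 0 z (x + r • ev φ) + Real.cos φ * pd 1 z (x + r • ev φ))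
     (r * (Real.sin φ ^ 2 * pd 0 (pd 0 z) (x + r • ev φ) - 2 * (Real.sin φ * Real.cos φ) * pd 0 (pd 1 z) (x + r • ev φ)
        + Real.cos φ ^ 2 * pd 1 (pd 1 z) (x + r • ev φ)) -
        (ev φ 0 * pd 0 z (x + r • ev φ) + ev φ 1 * pd 1 z (x + r • ev φ))) φ := by
    intro φ
    have h0 := hasDerivAt_comp_pd ((pd_contDiff hz 0).differentiable (by norm_num) _) (hasDerivAt_circ x r φ)
    have h1 := hasDerivAt_comp_pd ((pd_contDiff hz 1).differentiable (by norm_num) _) (hasDerivAt_circ x r φ)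
    have := ((Real.hasDerivAt_sin φ).fun_neg.fun_mul h0).fun_add ((Real.hasDerivAt_cos φ).fun_mul h1)
    refine this.congr_deriv ?_
    rw [pd_comm (f := z) (hz.contDiffAt) 0 1]
    simp only [ev_zero, ev_one, PiLp.smul_apply, ep_zero, ep_one, smul_eq_mul]
    ring
  have := intervalIntegral.integral_eq_sub_of_hasDerivAt (a := -Real.pi) (b := Real.pi) (fun φ _ => hd φ)
    (by apply Continuous.intervalIntegrable; simp only [ev_zero, ev_one]; fun_prop)
  have e : ev (-Real.pi) = ev Real.pi := by simp [ev]
  rw [intervalIntegral.integral_sub (by apply Continuous.intervalIntegrable; fun_prop)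
    (by apply Continuous.intervalIntegrable; simp only [ev_zero, ev_one]; fun_prop),
    intervalIntegral.integral_const_mul, e] at this
  simp only [Real.sin_neg, Real.cos_neg, Real.sin_pi, neg_zero, sub_self] at this
  unfold cp
  linarith

theorem cq_hasDerivAt {z : E2 → ℝ} (hz : ContDiff ℝ 2 z) (x : E2) (r : ℝ) :
    HasDerivAt (fun r => r * cp z x r) (r * ∫ φ in (-Real.pi)..Real.pi, lapl z (x + r • ev φ)) r := by
  have cP := cont_polar x
  have c0 := (pd_contDiff hz 0).continuous.comp cP
  have c1 := (pd_contDiff hz 1).continuous.comp cP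
  have c00 := (pd2_continuous hz 0 0).comp cP
  have c01 := (pd2_continuous hz 1 0).comp cP
  have c11 := (pd2_continuous hz 1 1).comp cP
  simp only [Function.comp_def] at c0 c1 c00 c01 c11
  have hp : HasDerivAt (cp z x) (∫ φ in (-Real.pi)..Real.pi,
     (Real.cos φ ^ 2 * pd 0 (pd 0 z) (x + r • ev φ) + 2 * (Real.sin φ * Real.cos φ) * pd 0 (pd 1 z) (x + r • ev φ)
        + Real.sin φ ^ 2 * pd 1 (pd 1 z) (x + r • ev φ))) r := by
    refine hasDerivAt_param (G := fun r φ => (ev φ 0 * pd 0 z (x + r • ev φ) + ev φ 1 * pd 1 z (x + r • ev φ)))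
      (G' := fun r φ => (Real.cos φ ^ 2 * pd 0 (pd 0 z) (x + r • ev φ) + 2 * (Real.sin φ * Real.cos φ) * pd 0 (pd 1 z) (x + r • ev φ)
        + Real.sin φ ^ 2 * pd 1 (pd 1 z) (x + r • ev φ))) ?_ ?_ ?_ _ _ _
    · simp only [Function.uncurry_def, ev_zero, ev_one]; fun_prop
    · simp only [Function.uncurry_def]; fun_prop
    · intro r φ
      have h0 := hasDerivAt_comp_pd ((pd_contDiff hz 0).differentiable (by norm_num) _) (hasDerivAt_ray x r φ)
      have h1 := hasDerivAt_comp_pd ((pd_contDiff hz 1).differentiable (by norm_num) _) (hasDerivAt_ray x r φ)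
      have := (h0.const_mul (ev φ 0)).fun_add (h1.const_mul (ev φ 1))
      refine this.congr_deriv ?_
      rw [pd_comm (f := z) (hz.contDiffAt) 0 1]
      simp only [ev_zero, ev_one]
      ring
  have := (hasDerivAt_id' r).fun_mul hp
  refine this.congr_deriv ?_
  have cP' : Continuous (fun φ : ℝ => x + r • ev φ) := by have := ev_continuous; fun_prop
  have c00 := (pd2_continuous hz 0 0).comp cP'
  have c01 := (pd2_continuous hz 1 0).comp cP'
  have c11 := (pd2_continuous hz 1 1).comp cP'
  simp only [Function.comp_def] at c00 c01 c11
  rw [cp_eq hz, one_mul]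
  rw [← mul_add, ← intervalIntegral.integral_add (by apply Continuous.intervalIntegrable; fun_prop)
   (by apply Continuous.intervalIntegrable; fun_prop)]
  congr 1
  apply intervalIntegral.integral_congr
  intro φ _
  simp only [lapl]
  have := Real.sin_sq_add_cos_sq φ
  linear_combination ((pd 0 (pd 0 z) (x + r • ev φ)) + pd 1 (pd 1 z) (x + r • ev φ)) * this

theorem cm_zero (z : E2 → ℝ) (x : E2) : cm z x 0 = 2 * Real.pi * z x := by
  simp only [cm, zero_smul, add_zero, intervalIntegral.integral_const, smul_eq_mul]; ring

theorem cm_mono {z : E2 → ℝ} (hz : ContDiff ℝ 2 z) (x : E2) (c t : ℝ)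
    (hl : ∀ y ∈ ball x t, -c ≤ lapl z y) :
    MonotoneOn (fun r => cm z x r + Real.pi * c * r ^ 2 / 2) (Set.Icc 0 t) := by
  have hq : MonotoneOn (fun r => r * cp z x r + Real.pi * c * r ^ 2) (Set.Icc 0 t) := by
    have hd : ∀ r, HasDerivAt (fun r => r * cp z x r + Real.pi * c * r ^ 2)
      (r * (∫ φ in (-Real.pi)..Real.pi, lapl z (x + r • ev φ)) + Real.pi * c * (2 * r)) r := by
      intro r
      have := (cq_hasDerivAt hz x r).fun_add (((hasDerivAt_id' r).fun_pow 2).const_mul (Real.pi * c))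
      refine this.congr_deriv ?_
      simp
    refine monotoneOn_of_deriv_nonneg (convex_Icc _ _) (fun r _ => (hd r).continuousAt.continuousWithinAt)
      (fun r _ => (hd r).differentiableAt.differentiableWithinAt) ?_
    intro r hr
    rw [interior_Icc] at hr
    rw [(hd r).deriv]
    have cP' : Continuous (fun φ : ℝ => x + r • ev φ) := by have := ev_continuous; fun_prop
    have : ∫ φ in (-Real.pi)..Real.pi, (-c) ≤ ∫ φ in (-Real.pi)..Real.pi, lapl z (x + r • ev φ) := by
      apply intervalIntegral.integral_mono_on (by linarith [Real.pi_pos]) (by simp)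
      · exact ((lapl_continuous hz).comp cP').intervalIntegrable _ _
      · intro φ _
        apply hl
        rw [mem_ball, dist_eq_norm, add_sub_cancel_left, norm_smul_ev hr.1.le]; exact hr.2
    simp at this
    have := mul_le_mul_of_nonneg_left this hr.1.le
    nlinarith
  have hd : ∀ r, HasDerivAt (fun r => cm z x r + Real.pi * c * r ^ 2 / 2)
      (cp z x r + Real.pi * c * r) r := by
    intro r
    have := (cm_hasDerivAt (hz.of_le (by norm_num)) x r).fun_add ((((hasDerivAt_id' r).fun_pow 2).const_mul (Real.pi * c)).div_const 2)
    refine this.congr_deriv ?_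
    simp; ring
  refine monotoneOn_of_deriv_nonneg (convex_Icc _ _) (fun r _ => (hd r).continuousAt.continuousWithinAt)
      (fun r _ => (hd r).differentiableAt.differentiableWithinAt) ?_
  intro r hr
  rw [interior_Icc] at hr
  rw [(hd r).deriv]
  have := hq ⟨le_rfl, (hr.1.trans hr.2).le⟩ ⟨hr.1.le, hr.2.le⟩ hr.1.le
  simp at this
  have h2 : 0 ≤ r * (cp z x r + Real.pi * c * r) := by nlinarith
  exact nonneg_of_mul_nonneg_right h2 hr.1

/-- integral over a radial set -/
theorem radial_integral {z : E2 → ℝ} (hz : Continuous z) (x : E2) (S : Set ℝ) (hS : MeasurableSet S)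
    (T : ℝ) (hST : S ⊆ Set.Iic T) :
    ∫ y in {y | ‖y - x‖ ∈ S}, z y = ∫ r in S ∩ Set.Ioi 0, r * cm z x r := by
  have hm : MeasurableSet {y : E2 | ‖y - x‖ ∈ S} := by
    have : Measurable (fun y : E2 => ‖y - x‖) := by fun_prop
    exact this hS
  have key : ∀ r φ : ℝ, 0 < r → ({y : E2 | ‖y - x‖ ∈ S}.indicator z) (r • ev φ + x) =
      S.indicator (fun r => z (x + r • ev φ)) r := by
    intro r φ hr
    by_cases h : r ∈ S
    · rw [Set.indicator_of_mem h, Set.indicator_of_mem, add_comm]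
      simpa [norm_smul_ev hr.le] using h
    · rw [Set.indicator_of_notMem h, Set.indicator_of_notMem]
      simpa [norm_smul_ev hr.le] using h
  rw [← integral_indicator hm, ← integral_add_right_eq_self _ x, polar_integral_iter]
  · rw [Set.inter_comm, ← setIntegral_indicator hS]
    apply setIntegral_congr_fun measurableSet_Ioi
    intro r hr
    simp only [key r _ hr]
    by_cases h : r ∈ S
    · simp [h, cm]
    · simp [h]
  · have hc : Continuous (fun p : ℝ × ℝ => p.1 * z (x + p.1 • ev p.2)) := by
      have := cont_polar x
      fun_prop
    have h1 : IntegrableOn (fun p : ℝ × ℝ => p.1 * z (x + p.1 • ev p.2)) ((S ∩ Set.Ioi 0) ×ˢ Set.Ioo (-Real.pi) Real.pi) := by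
      refine (hc.continuousOn.integrableOn_compact
        ((isCompact_Icc (a := 0) (b := T)).prod (isCompact_Icc (a := -Real.pi) (b := Real.pi)))).mono_set ?_
      exact Set.prod_mono (fun r hr => ⟨hr.2.le, hST hr.1⟩) Set.Ioo_subset_Icc_self
    have h2 := (integrable_indicator_iff ((hS.inter measurableSet_Ioi).prod measurableSet_Ioo)).2 h1
    refine h2.integrableOn.congr_fun (s := Set.Ioi 0 ×ˢ Set.Ioo (-Real.pi) Real.pi) ?_ (measurableSet_Ioi.prod measurableSet_Ioo)
    rintro ⟨r, φ⟩ ⟨hr, hφ⟩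
    simp only
    rw [key r _ hr]
    by_cases h : r ∈ S
    · rw [Set.indicator_of_mem, Set.indicator_of_mem h]
      exact ⟨⟨h, hr⟩, hφ⟩
    · rw [Set.indicator_of_notMem, Set.indicator_of_notMem h, mul_zero]
      rintro ⟨⟨h', _⟩, _⟩; exact h h'

theorem cm_continuous {z : E2 → ℝ} (hz : ContDiff ℝ 2 z) (x : E2) : Continuous (cm z x) :=
  continuous_iff_continuousAt.2 fun r => (cm_hasDerivAt (hz.of_le (by norm_num)) x r).continuousAt

/-- volume sub-mean value inequality -/
theorem submean {z : E2 → ℝ} (hz : ContDiff ℝ 2 z) (x : E2) (c t : ℝ) (ht : 0 ≤ t)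
    (hl : ∀ y ∈ ball x t, -c ≤ lapl z y) :
    Real.pi * t ^ 2 * z x - Real.pi * c * t ^ 4 / 8 ≤ ∫ y in ball x t, z y := by
  have hb : ball x t = {y | ‖y - x‖ ∈ Set.Iio t} := by
    ext y; simp [dist_eq_norm]
  rw [hb, radial_integral hz.continuous x _ measurableSet_Iio t Set.Iio_subset_Iic_self]
  have : Set.Iio t ∩ Set.Ioi 0 = Set.Ioo 0 t := by ext; simp [and_comm]
  rw [this, ← integral_Ioc_eq_integral_Ioo, ← intervalIntegral.integral_of_le ht]
  have hm := cm_mono hz x c t hl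
  have hle : ∫ r in (0:ℝ)..t, (2 * Real.pi * z x * r - Real.pi * c / 2 * r ^ 3) ≤ ∫ r in (0:ℝ)..t, r * cm z x r := by
    apply intervalIntegral.integral_mono_on ht
    · apply Continuous.intervalIntegrable; fun_prop
    · apply Continuous.intervalIntegrable; exact continuous_id.mul (cm_continuous hz x)
    · intro r hr
      have := hm ⟨le_rfl, ht⟩ hr hr.1
      simp [cm_zero] at this
      nlinarith [mul_le_mul_of_nonneg_left this hr.1]
  refine le_trans (le_of_eq ?_) hle
  rw [intervalIntegral.integral_sub (by apply Continuous.intervalIntegrable; fun_prop) (by apply Continuous.intervalIntegrable; fun_prop),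
    intervalIntegral.integral_const_mul, intervalIntegral.integral_const_mul, integral_id, integral_pow]
  norm_num; ring

/-- annulus bound for superharmonic functions -/
theorem annulus_bound {z : E2 → ℝ} (hz : ContDiff ℝ 2 z) (a b B : ℝ) (ha : 0 < a) (hab : a ≤ b)
    (hl : ∀ y ∈ ball (0:E2) b, lapl z y ≤ 0) (hB : ∀ y : E2, ‖y‖ = a → z y ≤ B) (hB0 : 0 ≤ B) :
    ∫ y in {y : E2 | ‖y‖ ∈ Set.Icc a b}, z y ≤ 2 * Real.pi * B * b ^ 2 := by
  have h := radial_integral hz.continuous 0 (Set.Icc a b) measurableSet_Icc b Set.Icc_subset_Iic_self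
  simp only [sub_zero] at h
  rw [h]
  have hs : Set.Icc a b ∩ Set.Ioi 0 = Set.Icc a b := by
    ext r; simp; intro h1 _; linarith
  rw [hs, integral_Icc_eq_integral_Ioc, ← intervalIntegral.integral_of_le hab]
  have hm := cm_mono (z := fun y => - z y) hz.neg 0 0 b (by intro y hy; rw [lapl_neg]; linarith [hl y hy])
  have hneg : ∀ r, cm (fun y => - z y) 0 r = - cm z 0 r := by intro r; simp [cm]
  have hma : cm z 0 a ≤ 2 * Real.pi * B := by
    have cP' : Continuous (fun φ : ℝ => (0:E2) + a • ev φ) := by have := ev_continuous; fun_prop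
    have : cm z 0 a ≤ ∫ φ in (-Real.pi)..Real.pi, B := by
      apply intervalIntegral.integral_mono_on (by linarith [Real.pi_pos]) _ (by simp)
      · intro φ _
        apply hB; rw [zero_add, norm_smul_ev ha.le]
      · exact (hz.continuous.comp cP').intervalIntegrable _ _
    simp at this; linarith
  have hle : ∫ r in a..b, r * cm z 0 r ≤ ∫ r in a..b, b * (2 * Real.pi * B) := by
    apply intervalIntegral.integral_mono_on hab
    · apply Continuous.intervalIntegrable; exact continuous_id.mul (cm_continuous hz 0)
    · simp
    · intro r hr
      have := hm ⟨ha.le, hab⟩ ⟨ha.le.trans hr.1, hr.2⟩ hr.1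
      simp [hneg] at this
      have h0 : 0 ≤ r := ha.le.trans hr.1
      calc r * cm z 0 r ≤ r * (2 * Real.pi * B) := by gcongr; linarith
        _ ≤ _ := by gcongr; exact hr.2
  refine hle.trans ?_
  simp
  have : 0 ≤ Real.pi * B := by positivity
  nlinarith [mul_nonneg this (mul_nonneg ha.le (ha.le.trans hab))]


/-- kernel -/
noncomputable def KK (j : Fin 2) (y : E2) : ℝ := y j / ‖y‖ ^ 2

theorem cp_continuous {z : E2 → ℝ} (hz : ContDiff ℝ 1 z) (x : E2) : Continuous (cp z x) := by
  unfold cp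
  have cP := cont_polar x
  have c0 := (pd_continuous hz 0).comp cP
  have c1 := (pd_continuous hz 1).comp cP
  simp only [Function.comp_def] at c0 c1
  apply intervalIntegral.continuous_parametric_intervalIntegral_of_continuous'
  simp only [Function.uncurry_def, ev_zero, ev_one]; fun_prop

theorem circ_int_zero {f : E2 → ℝ} (hf : ContDiff ℝ 1 f) (x : E2) {r : ℝ} (hr : 0 < r) :
    ∫ φ in (-Real.pi)..Real.pi, (-Real.sin φ * pd 0 f (x + r • ev φ) + Real.cos φ * pd 1 f (x + r • ev φ)) = 0 := by
  have hd : ∀ φ, HasDerivAt (fun φ => r⁻¹ * f (x + r • ev φ)) (-Real.sin φ * pd 0 f (x + r • ev φ) + Real.cos φ * pd 1 f (x + r • ev φ)) φ := by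
    intro φ
    have h0 := (hasDerivAt_comp_pd (hf.differentiable (by norm_num) _) (hasDerivAt_circ x r φ)).const_mul r⁻¹
    refine h0.congr_deriv ?_
    simp only [PiLp.smul_apply, ep_zero, ep_one, smul_eq_mul]
    field_simp
  have cP : Continuous (fun φ : ℝ => x + r • ev φ) := by have := ev_continuous; fun_prop
  have c0 := (pd_continuous hf 0).comp cP
  have c1 := (pd_continuous hf 1).comp cP
  simp only [Function.comp_def] at c0 c1
  rw [intervalIntegral.integral_eq_sub_of_hasDerivAt (fun φ _ => hd φ)
    (by apply Continuous.intervalIntegrable; fun_prop)]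
  have e : ev (-Real.pi) = ev Real.pi := by simp [ev]
  rw [e]; simp

theorem circ_lapl {g : E2 → ℝ} (hg : ContDiff ℝ 2 g) (x : E2) {r : ℝ} (hr : 0 < r) (j : Fin 2) :
    ∫ φ in (-Real.pi)..Real.pi, ev φ j * lapl g (x + r • ev φ) = cp (pd j g) x r := by
  have cP : Continuous (fun φ : ℝ => x + r • ev φ) := by have := ev_continuous; fun_prop
  have cc : ∀ k l, Continuous fun φ => pd l (pd k g) (x + r • ev φ) := fun k l =>
    (pd2_continuous hg k l).comp cP
  have c00 := cc 0 0
  have c01 := cc 0 1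
  have c10 := cc 1 0
  have c11 := cc 1 1
  have h0 := circ_int_zero (pd_contDiff hg 0) x hr
  have h1 := circ_int_zero (pd_contDiff hg 1) x hr
  unfold cp
  fin_cases j
  · simp only [Fin.zero_eta, ev_zero, ev_one]
    rw [← add_zero (∫ φ in (-Real.pi)..Real.pi, (Real.cos φ * pd 0 (pd 0 g) (x + r • ev φ) + _)), ← h1,
      ← intervalIntegral.integral_add (by apply Continuous.intervalIntegrable; fun_prop) (by apply Continuous.intervalIntegrable; fun_prop)]
    apply intervalIntegral.integral_congr
    intro φ _
    simp only [lapl]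
    rw [pd_comm (hg.contDiffAt) 0 1]; ring
  · simp only [Fin.mk_one, ev_zero, ev_one]
    rw [← sub_zero (∫ φ in (-Real.pi)..Real.pi, (Real.cos φ * pd 0 (pd 1 g) (x + r • ev φ) + _)), ← h0,
      ← intervalIntegral.integral_sub (by apply Continuous.intervalIntegrable; fun_prop) (by apply Continuous.intervalIntegrable; fun_prop)]
    apply intervalIntegral.integral_congr
    intro φ _
    simp only [lapl]
    rw [pd_comm (hg.contDiffAt) 0 1]; ring

theorem pd_zero_of_eventually {g : E2 → ℝ} {x : E2} (h : g =ᶠ[nhds x] fun _ => 0) (j : Fin 2) : 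
    pd j g =ᶠ[nhds x] fun _ => 0 := by
  filter_upwards [pd_congr h j] with y hy
  rw [hy]; simp [pd]

theorem repA {g : E2 → ℝ} (hg : ContDiff ℝ 2 g) (hc : HasCompactSupport g) (x : E2) (j : Fin 2) :
    pd j g x = -(1 / (2 * Real.pi)) * ∫ η, KK j η * lapl g (x + η) := by
  obtain ⟨T, hT0, hT⟩ : ∃ T > 0, ∀ y, T < ‖y - x‖ → g =ᶠ[nhds y] fun _ => 0 := by
    obtain ⟨T, hT⟩ := hc.isCompact.isBounded.subset_closedBall x
    refine ⟨max T 1, by positivity, fun y hy => ?_⟩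
    have : y ∉ tsupport g := fun h => by
      have := hT h
      rw [mem_closedBall, dist_eq_norm] at this
      exact absurd (lt_of_le_of_lt (le_max_left _ _) hy) (not_lt.2 this)
    exact notMem_tsupport_iff_eventuallyEq.1 this
  have hF := pd_contDiff hg j
  have hpz : ∀ y, T < ‖y - x‖ → pd j g y = 0 := fun y hy => (pd_zero_of_eventually (hT y hy) j).self_of_nhds
  have hlz : ∀ y, T < ‖y - x‖ → lapl g y = 0 := fun y hy => by
    simp [lapl, (pd_zero_of_eventually (pd_zero_of_eventually (hT y hy) 0) 0).self_of_nhds,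
     (pd_zero_of_eventually (pd_zero_of_eventually (hT y hy) 1) 1).self_of_nhds]
  have hcs : HasCompactSupport (cm (pd j g) x) := by
    refine HasCompactSupport.of_support_subset_isCompact (isCompact_Icc (a := -T) (b := T)) ?_
    intro r hr
    by_contra hn
    apply hr
    have hTr : T < |r| := by
      rw [lt_abs]
      by_contra hh
      push Not at hh
      exact hn ⟨by linarith [hh.2], hh.1⟩
    unfold cm
    have : ∀ φ, pd j g (x + r • ev φ) = 0 := by
      intro φ; apply hpz
      rw [add_sub_cancel_left, norm_smul, norm_ev]; simpa using hTr
    simp [this]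
  have hcd : ContDiff ℝ 1 (cm (pd j g) x) := by
    rw [contDiff_one_iff_deriv]
    refine ⟨fun r => (cm_hasDerivAt hF x r).differentiableAt, ?_⟩
    have : deriv (cm (pd j g) x) = cp (pd j g) x := by
      ext r; exact (cm_hasDerivAt hF x r).deriv
    rw [this]; exact cp_continuous hF x
  have h1 := hcs.integral_Ioi_deriv_eq hcd 0
  rw [cm_zero] at h1
  have key : ∀ r φ : ℝ, 0 < r → r * (KK j (r • ev φ) * lapl g (x + r • ev φ)) = ev φ j * lapl g (x + r • ev φ) := by
    intro r φ hr
    unfold KK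
    rw [norm_smul_ev hr.le]
    simp only [PiLp.smul_apply, smul_eq_mul]
    field_simp
  have hji : ∀ φ, ev φ j = if j = 0 then Real.cos φ else Real.sin φ := by
    intro φ; fin_cases j <;> simp
  have hjc : Continuous fun φ => ev φ j := by
    simp only [hji]; split_ifs <;> fun_prop
  rw [polar_integral_iter]
  · have : ∫ r in Set.Ioi (0:ℝ), r * ∫ φ in (-Real.pi)..Real.pi, KK j (r • ev φ) * lapl g (x + r • ev φ)
      = ∫ r in Set.Ioi (0:ℝ), deriv (cm (pd j g) x) r := by
      apply setIntegral_congr_fun measurableSet_Ioi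
      intro r hr
      simp only
      rw [← intervalIntegral.integral_const_mul, (cm_hasDerivAt hF x r).deriv, ← circ_lapl hg x hr j]
      apply intervalIntegral.integral_congr
      intro φ _
      exact key r φ hr
    rw [this, h1]
    field_simp
  · have hcont : Continuous fun p : ℝ × ℝ => ev p.2 j * lapl g (x + p.1 • ev p.2) :=
      (hjc.comp continuous_snd).mul ((lapl_continuous hg).comp (cont_polar x))
    have hi : IntegrableOn (fun p : ℝ × ℝ => ev p.2 j * lapl g (x + p.1 • ev p.2)) (Set.Ioi 0 ×ˢ Set.Ioo (-Real.pi) Real.pi) := by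
      refine ((hcont.continuousOn.integrableOn_compact
        ((isCompact_Icc (a := 0) (b := T)).prod (isCompact_Icc (a := -Real.pi) (b := Real.pi))))).of_forall_diff_eq_zero
        (measurableSet_Ioi.prod measurableSet_Ioo) ?_
      rintro ⟨r, φ⟩ ⟨⟨hr, hφ⟩, hn⟩
      have : T < r := by
        by_contra h
        exact hn ⟨⟨le_of_lt hr, not_lt.1 h⟩, Set.Ioo_subset_Icc_self hφ⟩
      simp only
      rw [hlz, mul_zero]
      rw [add_sub_cancel_left, norm_smul_ev (le_of_lt hr)]; exact this
    refine hi.congr_fun ?_ (measurableSet_Ioi.prod measurableSet_Ioo)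
    rintro ⟨r, φ⟩ ⟨hr, hφ⟩
    exact (key r φ hr).symm

theorem vol_ball2 (x : E2) (t : ℝ) (ht : 0 ≤ t) : (volume (ball x t)).toReal = Real.pi * t ^ 2 := by
  rw [EuclideanSpace.volume_ball_fin_two]
  simp [ENNReal.toReal_ofReal ht, ENNReal.toReal_ofReal Real.pi_pos.le]
  ring

/-- epsilon regularity -/
theorem eps_reg {Λ : ℝ} (hΛ : 0 < Λ) {z : E2 → ℝ} (hz : ContDiff ℝ 2 z) (x : E2) {ρ a η : ℝ} (hρ : 0 < ρ)
    (ha : 0 < a) (hl : ∀ y ∈ ball x ρ, a * Real.exp (z y) ≤ - lapl z y ∧ - lapl z y ≤ Λ * a * Real.exp (z y))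
    (hη : η ≤ 1 / Λ) (hm : ∫ y in ball x ρ, - lapl z y ≤ η) :
    - lapl z x ≤ 4 * Λ * η / ρ ^ 2 := by
  have hcont : Continuous (fun y => (ρ - ‖y - x‖) ^ 2 * Real.exp (z y)) := by
    have := hz.continuous; fun_prop
  obtain ⟨y0, hy0, hmax⟩ := (isCompact_closedBall x ρ).exists_isMaxOn ⟨x, mem_closedBall_self hρ.le⟩ hcont.continuousOn
  have hmax' : ∀ y ∈ closedBall x ρ, (ρ - ‖y - x‖) ^ 2 * Real.exp (z y) ≤ (ρ - ‖y0 - x‖) ^ 2 * Real.exp (z y0) := hmax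
  set L := Real.exp (z y0) with hL
  have hLpos : 0 < L := Real.exp_pos _
  have hx := hmax' x (mem_closedBall_self hρ.le)
  simp only [sub_self, norm_zero, sub_zero] at hx
  rw [mem_closedBall, dist_eq_norm] at hy0
  have hlt : ‖y0 - x‖ < ρ := by
    rcases hy0.lt_or_eq with h | h
    · exact h
    · rw [h] at hx; simp at hx
      have : 0 < ρ ^ 2 * Real.exp (z x) := by positivity
      linarith
  set σ := (ρ - ‖y0 - x‖) / 2 with hσ
  have hσpos : 0 < σ := by rw [hσ]; linarith
  have hS : (ρ - ‖y0 - x‖) ^ 2 * L = 4 * σ ^ 2 * L := by rw [hσ]; ring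
  rw [hS] at hx hmax'
  have hsub : ball y0 σ ⊆ ball x ρ := by
    intro y hy
    rw [mem_ball, dist_eq_norm] at hy ⊢
    calc ‖y - x‖ ≤ ‖y - y0‖ + ‖y0 - x‖ := by
          have := norm_add_le (y - y0) (y0 - x); simpa using this
      _ < ρ := by rw [hσ] at hy; linarith
  have hbd : ∀ y ∈ ball y0 σ, Real.exp (z y) ≤ 4 * L := by
    intro y hy
    have h1 := hmax' y (ball_subset_closedBall (hsub hy))
    rw [mem_ball, dist_eq_norm] at hy
    have h2 : ‖y - x‖ ≤ ‖y - y0‖ + ‖y0 - x‖ := by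
      have := norm_add_le (y - y0) (y0 - x); simpa using this
    have h3 : σ ≤ ρ - ‖y - x‖ := by
      have : ρ - ‖y0 - x‖ = 2 * σ := by rw [hσ]; ring
      linarith
    have h4 : σ ^ 2 * Real.exp (z y) ≤ σ ^ 2 * (4 * L) := by
      have : σ ^ 2 ≤ (ρ - ‖y - x‖) ^ 2 := by gcongr
      have := mul_le_mul_of_nonneg_right this (Real.exp_pos (z y)).le
      nlinarith
    exact le_of_mul_le_mul_left h4 (by positivity)
  set b := Λ * a with hb
  have hbpos : 0 < b := by positivity
  -- main mass inequality
  have hmass : ∀ t, 0 < t → t ≤ σ → b * L * t ^ 2 ≤ 1 → L * Real.pi * t ^ 2 / 2 ≤ η / a := by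
    intro t ht htσ hbt
    have hsm := submean hz y0 (4 * b * L) t ht.le (by
      intro y hy
      have hy' := ball_subset_ball htσ hy
      have := (hl y (hsub hy')).2
      have := mul_le_mul_of_nonneg_left (hbd y hy') hbpos.le
      linarith)
    set m := z y0 - b * L * t ^ 2 / 2 with hmdef
    have hint : ∀ f : E2 → ℝ, Continuous f → IntegrableOn f (ball y0 t) := fun f hf =>
      (hf.continuousOn.integrableOn_compact (isCompact_closedBall y0 t)).mono_set ball_subset_closedBall
    have hJ : ∫ y in ball y0 t, Real.exp m * (1 - m + z y) ≤ ∫ y in ball y0 t, Real.exp (z y) := by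
      apply setIntegral_mono (hint _ (by have := hz.continuous; fun_prop)) (hint _ (by have := hz.continuous; fun_prop))
      intro y
      simp only
      have h1 := Real.add_one_le_exp (z y - m)
      have h2 : Real.exp (z y) = Real.exp m * Real.exp (z y - m) := by rw [← Real.exp_add]; ring_nf
      rw [h2]
      gcongr; linarith
    rw [integral_const_mul, integral_add (hint _ continuous_const) (hint _ hz.continuous), setIntegral_const,
      Measure.real, vol_ball2 _ _ ht.le, smul_eq_mul] at hJ
    have h5 : Real.exp m * (Real.pi * t ^ 2) ≤ ∫ y in ball y0 t, Real.exp (z y) := by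
      refine le_trans ?_ hJ
      gcongr
      rw [hmdef]
      nlinarith [hsm]
    have h6 : a * ∫ y in ball y0 t, Real.exp (z y) ≤ η := by
      refine le_trans ?_ hm
      rw [← integral_const_mul]
      have hc1 : Continuous (fun y => a * Real.exp (z y)) := by have := hz.continuous; fun_prop
      have hc2 : Continuous (fun y => - lapl z y) := (lapl_continuous hz).neg
      have hi2 : IntegrableOn (fun y => - lapl z y) (ball x ρ) :=
        (hc2.continuousOn.integrableOn_compact (isCompact_closedBall x ρ)).mono_set ball_subset_closedBall
      have hss : ball y0 t ⊆ ball x ρ := (ball_subset_ball htσ).trans hsub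
      calc ∫ y in ball y0 t, a * Real.exp (z y) ≤ ∫ y in ball y0 t, - lapl z y := by
            apply setIntegral_mono_on (hint _ hc1) (hint _ hc2) measurableSet_ball
            intro y hy; exact (hl y (hss hy)).1
        _ ≤ _ := by
            apply setIntegral_mono_set hi2 _ hss.eventuallyLE
            filter_upwards [ae_restrict_mem measurableSet_ball] with y hy
            exact le_trans (by positivity) (hl y hy).1
    have h7 : L / 2 ≤ Real.exp m := by
      have : Real.exp m = L * Real.exp (-(b * L * t ^ 2 / 2)) := by
        rw [hmdef, sub_eq_add_neg, Real.exp_add]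
      rw [this]
      have := Real.add_one_le_exp (-(b * L * t ^ 2 / 2))
      have : (1:ℝ)/2 ≤ Real.exp (-(b * L * t ^ 2 / 2)) := by linarith
      nlinarith
    rw [le_div_iff₀ ha]
    have : L / 2 * (Real.pi * t ^ 2) ≤ Real.exp m * (Real.pi * t ^ 2) := by gcongr
    nlinarith
  have hpi := Real.pi_gt_three
  have hcase : b * L * σ ^ 2 ≤ 1 := by
    by_contra hcon
    push Not at hcon
    set t := Real.sqrt (1 / (b * L)) with ht
    have htpos : 0 < t := Real.sqrt_pos.2 (by positivity)
    have ht2 : t ^ 2 = 1 / (b * L) := Real.sq_sqrt (by positivity)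
    have htσ : t ≤ σ := by
      rw [ht]; apply Real.sqrt_le_iff.2 ⟨hσpos.le, ?_⟩
      rw [div_le_iff₀ (by positivity)]; linarith
    have := hmass t htpos htσ (by rw [ht2]; field_simp; exact le_rfl)
    rw [ht2] at this
    have h1 : L * Real.pi * (1 / (b * L)) / 2 = Real.pi / 2 / Λ / a := by rw [hb]; field_simp
    rw [h1] at this
    have h2 := (div_le_div_iff_of_pos_right ha).1 this
    have h3 := h2.trans hη
    rw [div_le_div_iff_of_pos_right hΛ] at h3
    linarith
  have h8 := hmass σ hσpos le_rfl hcase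
  have h9 : ρ ^ 2 * Real.exp (z x) ≤ 4 * (η / a) := by
    refine hx.trans ?_
    have : 0 ≤ L * σ ^ 2 := by positivity
    nlinarith
  have h10 := (hl x (mem_ball_self hρ)).2
  refine h10.trans ?_
  rw [le_div_iff₀ (by positivity)]
  have := mul_le_mul_of_nonneg_left h9 hbpos.le
  have e : b * (4 * (η / a)) = 4 * Λ * η := by rw [hb]; field_simp
  rw [e] at this; linarith

theorem second_deriv_nonneg {f f' : ℝ → ℝ} {c : ℝ} (h1 : ∀ᶠ t in nhds (0:ℝ), HasDerivAt f (f' t) t)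
    (h2 : HasDerivAt f' c 0) (hmin : IsLocalMin f 0) : 0 ≤ c := by
  by_contra hc
  push Not at hc
  have hd : deriv f =ᶠ[nhds 0] f' := by
    filter_upwards [h1] with t ht using ht.deriv
  have hdd : deriv (deriv f) 0 = c := by rw [hd.deriv_eq]; exact h2.deriv
  have hmax := isLocalMax_of_deriv_deriv_neg (f := f) (x₀ := 0) (by rw [hdd]; exact hc)
    (hmin.deriv_eq_zero) h1.self_of_nhds.continuousAt
  have heq : f =ᶠ[nhds 0] fun _ => f 0 := by
    filter_upwards [hmin, hmax] with t a b using le_antisymm b a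
  have hd0 : deriv f =ᶠ[nhds 0] fun _ => 0 := by
    filter_upwards [heq.eventuallyEq_nhds] with t ht
    rw [ht.deriv_eq]; simp
  have : deriv (deriv f) 0 = 0 := by rw [hd0.deriv_eq]; simp
  linarith

theorem min_principle {u : E2 → ℝ} (hu : ContDiffOn ℝ 2 u (closedBall (0:E2) 1))
    (hl : ∀ x ∈ ball (0:E2) 1, lapl u x ≤ 0) (hb : ∀ x ∈ sphere (0:E2) 1, u x = 0) :
    ∀ x ∈ closedBall (0:E2) 1, 0 ≤ u x := by
  intro x1 hx1
  by_contra hneg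
  push Not at hneg
  set ε := -(u x1) / 2 with hε
  have hεpos : 0 < ε := by rw [hε]; linarith
  have hc : ContinuousOn (fun y => u y - ε * ‖y‖ ^ 2) (closedBall (0:E2) 1) :=
    hu.continuousOn.sub (by fun_prop)
  obtain ⟨x0, hx0, hmin⟩ := (isCompact_closedBall (0:E2) 1).exists_isMinOn ⟨x1, hx1⟩ hc
  have hmin' : ∀ y ∈ closedBall (0:E2) 1, u x0 - ε * ‖x0‖ ^ 2 ≤ u y - ε * ‖y‖ ^ 2 := hmin
  have hx0b : x0 ∈ ball (0:E2) 1 := by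
    rw [mem_ball_zero_iff]
    rw [mem_closedBall_zero_iff] at hx0
    rcases hx0.lt_or_eq with h | h
    · exact h
    · have h1 := hmin' x1 hx1
      have h2 := hb x0 (by simpa using h)
      rw [h2, h] at h1
      have : 0 ≤ ε * ‖x1‖ ^ 2 := by positivity
      rw [hε] at h1 this; linarith
  have hat : ∀ y ∈ ball (0:E2) 1, ContDiffAt ℝ 2 u y := fun y hy =>
    hu.contDiffAt (mem_of_superset (isOpen_ball.mem_nhds hy) ball_subset_closedBall)
  have key : ∀ j : Fin 2, 2 * ε ≤ pd j (pd j u) x0 := by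
    intro j
    set e : E2 := EuclideanSpace.single j 1 with he
    have hray : ∀ t : ℝ, HasDerivAt (fun t : ℝ => x0 + t • e) e t := fun t => by
      simpa using ((hasDerivAt_id t).smul_const e).const_add x0
    have hnear : ∀ᶠ t in nhds (0:ℝ), x0 + t • e ∈ ball (0:E2) 1 := by
      have : ContinuousAt (fun t : ℝ => x0 + t • e) 0 := (hray 0).continuousAt
      apply this.eventually_mem
      simpa using isOpen_ball.mem_nhds hx0b
    have hd1 : ∀ t : ℝ, x0 + t • e ∈ ball (0:E2) 1 → ∀ f : E2 → ℝ, DifferentiableAt ℝ f (x0 + t • e) →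
        HasDerivAt (fun t : ℝ => f (x0 + t • e)) (pd j f (x0 + t • e)) t := by
      intro t ht f hf
      exact hf.hasFDerivAt.comp_hasDerivAt t (hray t)
    have hN : ∀ t : ℝ, ‖x0 + t • e‖ ^ 2 = ‖x0‖ ^ 2 + 2 * t * x0 j + t ^ 2 := by
      intro t
      rw [norm_add_sq_real, norm_smul, inner_smul_right, he, EuclideanSpace.inner_single_right]
      simp; ring
    have hp : ∀ t : ℝ, HasDerivAt (fun t : ℝ => ε * (‖x0‖ ^ 2 + 2 * t * x0 j + t ^ 2)) (ε * (2 * x0 j + 2 * t)) t := by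
      intro t
      have := (((((hasDerivAt_id' t).const_mul 2).mul_const (x0 j)).const_add (‖x0‖^2)).fun_add ((hasDerivAt_id' t).fun_pow 2)).const_mul ε
      refine this.congr_deriv ?_
      simp
    have := second_deriv_nonneg (f := fun t => u (x0 + t • e) - ε * (‖x0‖ ^ 2 + 2 * t * x0 j + t ^ 2))
      (f' := fun t => pd j u (x0 + t • e) - ε * (2 * x0 j + 2 * t)) (c := pd j (pd j u) x0 - 2 * ε) ?_ ?_ ?_
    · linarith
    · filter_upwards [hnear] with t ht
      exact (hd1 t ht u ((hat _ ht).differentiableAt (by norm_num))).fun_sub (hp t)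
    · have hx0' : x0 + (0:ℝ) • e ∈ ball (0:E2) 1 := by simpa using hx0b
      have hdp : DifferentiableAt ℝ (pd j u) (x0 + (0:ℝ) • e) := by
        have h1 : DifferentiableAt ℝ (fderiv ℝ u) (x0 + (0:ℝ) • e) :=
          ((hat _ hx0').fderiv_right (m := 1) (by norm_num)).differentiableAt (by norm_num)
        exact h1.clm_apply (differentiableAt_const _)
      have h2 := (hd1 0 hx0' (pd j u) hdp).fun_sub ((((hasDerivAt_id' (0:ℝ)).const_mul 2).const_add (2 * x0 j)).const_mul ε)
      refine h2.congr_deriv ?_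
      simp; ring
    · filter_upwards [hnear] with t ht
      have := hmin' _ (ball_subset_closedBall ht)
      rw [hN] at this
      simpa using this
  have := hl x0 hx0b
  unfold lapl at this
  linarith [key 0, key 1]


theorem abs_coord_le (y : E2) (j : Fin 2) : |y j| ≤ ‖y‖ := by
  have := PiLp.norm_apply_le y j
  simpa using this

theorem abs_KK_le (j : Fin 2) (y : E2) : |KK j y| ≤ ‖y‖⁻¹ := by
  unfold KK
  rw [abs_div, abs_of_nonneg (by positivity : 0 ≤ ‖y‖ ^ 2)]
  rcases eq_or_ne y 0 with rfl | h
  · simp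
  have h0 : 0 < ‖y‖ := norm_pos_iff.2 h
  rw [div_le_iff₀ (by positivity)]
  calc |y j| ≤ ‖y‖ := abs_coord_le y j
    _ = _ := by field_simp

theorem KK_neg (j : Fin 2) (y : E2) : KK j (-y) = - KK j y := by
  simp [KK, neg_div]

theorem KK_smul (j : Fin 2) {R : ℝ} (hR : R ≠ 0) (y : E2) : KK j (R • y) = R⁻¹ * KK j y := by
  simp only [KK, PiLp.smul_apply, smul_eq_mul, norm_smul, mul_pow, Real.norm_eq_abs, sq_abs]
  rcases eq_or_ne y 0 with rfl | h
  · simp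
  have h0 : 0 < ‖y‖ := norm_pos_iff.2 h
  field_simp

theorem KK_measurable (j : Fin 2) : Measurable (KK j) := by
  unfold KK; fun_prop

theorem inv_norm_int (x : E2) (t : ℝ) (ht : 0 ≤ t) : IntegrableOn (fun y => ‖x - y‖⁻¹) (ball x t) ∧
    ∫ y in ball x t, ‖x - y‖⁻¹ = 2 * Real.pi * t := by
  have hdim : Module.finrank ℝ E2 = 2 := by simp
  have h0 : Integrable (fun y : E2 => (Set.Iio t).indicator (fun s => s⁻¹) ‖y‖) := by
    rw [integrable_fun_norm_addHaar, hdim]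
    have : IntegrableOn ((Set.Iio t).indicator (fun _ => (1:ℝ))) (Set.Ioi 0) := by
      rw [integrableOn_indicator_iff measurableSet_Iio]
      refine integrableOn_const ?_
      rw [Set.Iio_inter_Ioi]
      simp
    refine this.congr_fun ?_ measurableSet_Ioi
    intro s hs
    have : s ≠ 0 := ne_of_gt hs
    by_cases h : s < t <;> simp [h, this]
  have h1 : ∫ y : E2, (Set.Iio t).indicator (fun s => s⁻¹) ‖y‖ = 2 * Real.pi * t := by
    rw [integral_fun_norm_addHaar volume ((Set.Iio t).indicator (fun s => s⁻¹)), hdim]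
    have : ∫ s in Set.Ioi (0:ℝ), s ^ (2-1) • (Set.Iio t).indicator (fun s => s⁻¹) s = t := by
      have : ∫ s in Set.Ioi (0:ℝ), s ^ (2-1) • (Set.Iio t).indicator (fun s => s⁻¹) s = 
        ∫ s in Set.Ioi (0:ℝ), (Set.Iio t).indicator (fun _ => (1:ℝ)) s := by
        apply setIntegral_congr_fun measurableSet_Ioi
        intro s hs
        have : s ≠ 0 := ne_of_gt hs
        by_cases h : s < t <;> simp [h, this]
      rw [this, setIntegral_indicator measurableSet_Iio, Set.Ioi_inter_Iio]
      simp [ht]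
    rw [this, Measure.real, vol_ball2 _ _ (by norm_num)]
    simp; ring
  have e : (fun y : E2 => (Set.Iio t).indicator (fun s => s⁻¹) ‖x - y‖) = (ball x t).indicator (fun y => ‖x - y‖⁻¹) := by
    ext y
    by_cases h : ‖x - y‖ < t
    · simp [Set.indicator, h, dist_eq_norm, norm_sub_rev y x]
    · simp [Set.indicator, h, dist_eq_norm, norm_sub_rev y x]
  constructor
  · rw [← integrable_indicator_iff measurableSet_ball, ← e]
    exact h0.comp_sub_left x
  · rw [← integral_indicator measurableSet_ball, ← e, ← h1]
    exact integral_sub_left_eq_self (fun y : E2 => (Set.Iio t).indicator (fun s => s⁻¹) ‖y‖) volume x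

theorem inv_norm_mul_integrable {f : E2 → ℝ} (hf : Integrable f) (x : E2) {M t : ℝ} (ht : 0 < t)
    (hM : ∀ y ∈ ball x t, |f y| ≤ M) : Integrable (fun y => ‖x - y‖⁻¹ * f y) := by
  have hM0 : 0 ≤ M := (abs_nonneg _).trans (hM x (mem_ball_self ht))
  have hg : Integrable (fun y => (ball x t).indicator (fun y => ‖x - y‖⁻¹) y * M + t⁻¹ * |f y|) :=
    (((integrable_indicator_iff measurableSet_ball).2 (inv_norm_int x t ht.le).1).mul_const M).add (hf.abs.const_mul _)
  refine hg.mono' ?_ ?_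
  · exact (by fun_prop : Measurable fun y : E2 => ‖x - y‖⁻¹).aestronglyMeasurable.mul hf.aestronglyMeasurable
  · filter_upwards with y
    rw [Real.norm_eq_abs, abs_mul, abs_of_nonneg (by positivity : 0 ≤ ‖x - y‖⁻¹)]
    by_cases h : y ∈ ball x t
    · rw [Set.indicator_of_mem h]
      have := hM y h
      have : ‖x - y‖⁻¹ * |f y| ≤ ‖x - y‖⁻¹ * M := by gcongr
      have : 0 ≤ t⁻¹ * |f y| := by positivity
      linarith
    · rw [Set.indicator_of_notMem h]
      have : t ≤ ‖x - y‖ := by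
        rw [mem_ball, dist_comm, dist_eq_norm] at h; linarith
      have : ‖x - y‖⁻¹ * |f y| ≤ t⁻¹ * |f y| := by gcongr
      linarith

theorem KK_mul_integrable {f : E2 → ℝ} (hf : Integrable f) (x : E2) {M t : ℝ} (ht : 0 < t)
    (hM : ∀ y ∈ ball x t, |f y| ≤ M) (j : Fin 2) : Integrable (fun y => KK j (x - y) * f y) := by
  refine (inv_norm_mul_integrable hf x ht hM).norm.mono ?_ ?_
  · exact ((KK_measurable j).comp (by fun_prop : Measurable fun y : E2 => x - y)).aestronglyMeasurable.mul hf.aestronglyMeasurable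
  · filter_upwards with y
    rw [norm_norm, Real.norm_eq_abs, Real.norm_eq_abs, abs_mul, abs_mul, abs_of_nonneg (by positivity : 0 ≤ ‖x - y‖⁻¹)]
    have := abs_KK_le j (x - y)
    gcongr

theorem pd_mul {f g : E2 → ℝ} {x : E2} (hf : DifferentiableAt ℝ f x) (hg : DifferentiableAt ℝ g x) (j : Fin 2) :
    pd j (fun y => f y * g y) x = f x * pd j g x + g x * pd j f x := by
  unfold pd
  rw [fderiv_fun_mul hf hg]
  simp

theorem pd_add {f g : E2 → ℝ} {x : E2} (hf : DifferentiableAt ℝ f x) (hg : DifferentiableAt ℝ g x) (j : Fin 2) :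
    pd j (fun y => f y + g y) x = pd j f x + pd j g x := by
  unfold pd
  rw [fderiv_fun_add hf hg]
  simp

theorem lapl_mul {f g : E2 → ℝ} (hf : ContDiff ℝ 2 f) (hg : ContDiff ℝ 2 g) (x : E2) :
    lapl (fun y => f y * g y) x = f x * lapl g x + g x * lapl f x + 2 * (pd 0 f x * pd 0 g x + pd 1 f x * pd 1 g x) := by
  have h : ∀ j, pd j (pd j (fun y => f y * g y)) x = f x * pd j (pd j g) x + g x * pd j (pd j f) x + 2 * (pd j f x * pd j g x) := by
    intro j
    have df := hf.differentiable (by norm_num)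
    have dg := hg.differentiable (by norm_num)
    have df' := (pd_contDiff hf j).differentiable (by norm_num)
    have dg' := (pd_contDiff hg j).differentiable (by norm_num)
    have e : pd j (fun y => f y * g y) = fun y => f y * pd j g y + g y * pd j f y := by
      ext y; exact pd_mul (df y) (dg y) j
    rw [e]
    have : pd j (fun y => f y * pd j g y + g y * pd j f y) x = pd j (fun y => f y * pd j g y) x + pd j (fun y => g y * pd j f y) x :=
      pd_add ((df x).fun_mul (dg' x)) ((dg x).fun_mul (df' x)) j
    rw [this, pd_mul (df x) (dg' x), pd_mul (dg x) (df' x)]; ring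
  simp only [lapl, h]; ring

theorem pd_KK {x y : E2} (h : x ≠ y) (j k : Fin 2) :
    ContDiffAt ℝ 1 (fun η => KK j (η - y)) x ∧ |pd k (fun η => KK j (η - y)) x| ≤ 3 / ‖x - y‖ ^ 2 := by
  have hne : x - y ≠ 0 := sub_ne_zero.2 h
  have hpos : 0 < ‖x - y‖ := norm_pos_iff.2 hne
  have c1 : ContDiff ℝ 1 (fun η : E2 => (η - y) j) := by fun_prop
  have c2 : ContDiff ℝ 1 (fun η : E2 => ‖η - y‖ ^ 2) := (contDiff_id.sub contDiff_const).norm_sq ℝ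
  refine ⟨c1.contDiffAt.div c2.contDiffAt (by positivity), ?_⟩
  have hc : HasDerivAt (fun t : ℝ => x - y + t • EuclideanSpace.single k (1:ℝ)) (EuclideanSpace.single k (1:ℝ)) 0 := by
    simpa using ((hasDerivAt_id (0:ℝ)).smul_const (EuclideanSpace.single k (1:ℝ))).const_add (x - y)
  have hd : DifferentiableAt ℝ (fun η => KK j (η - y)) x :=
    (c1.contDiffAt.div c2.contDiffAt (by positivity)).differentiableAt (by norm_num)
  have h1 : HasFDerivAt (fun η : E2 => (η - y) j) (EuclideanSpace.proj j : E2 →L[ℝ] ℝ) x := by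
    have := (EuclideanSpace.proj j : E2 →L[ℝ] ℝ).hasFDerivAt (x := x)
    have := this.sub_const (y j)
    exact this
  have h2 : HasFDerivAt (fun η : E2 => ‖η - y‖ ^ 2) (2 • (innerSL ℝ (x - y))) x := by
    have h3 : HasFDerivAt (fun η : E2 => η - y) (ContinuousLinearMap.id ℝ E2) x := (hasFDerivAt_id x).sub_const y
    have := h3.norm_sq
    simpa using this
  have h3 := h1.mul ((hasDerivAt_inv (x := ‖x - y‖ ^ 2) (by positivity)).comp_hasFDerivAt x h2)
  have e : (fun η => KK j (η - y)) = ((fun η : E2 => (η - y) j) * ((fun y : ℝ => y⁻¹) ∘ fun η : E2 => ‖η - y‖ ^ 2)) := by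
    ext η; simp [KK, div_eq_mul_inv]
  have hb := abs_coord_le (x - y) j
  have hb' := abs_coord_le (x - y) k
  have e2 : pd k (fun η => KK j (η - y)) x = (x - y) j * (-((‖x - y‖ ^ 2) ^ 2)⁻¹ * (2 * (x - y) k)) + (‖x - y‖ ^ 2)⁻¹ * (if j = k then 1 else 0) := by
    unfold pd
    rw [e]
    erw [h3.fderiv]
    simp [EuclideanSpace.inner_single_right]
  rw [e2]
  have a1 : |(x - y) j * (-((‖x - y‖ ^ 2) ^ 2)⁻¹ * (2 * (x - y) k))| ≤ 2 / ‖x - y‖ ^ 2 := by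
    rw [abs_mul, abs_mul, abs_neg, abs_mul, abs_inv, abs_of_nonneg (by positivity : 0 ≤ (‖x - y‖ ^ 2) ^ 2)]
    calc _ ≤ ‖x - y‖ * (((‖x - y‖ ^ 2) ^ 2)⁻¹ * (|2| * ‖x - y‖)) := by gcongr
      _ = _ := by simp; field_simp
  have a2 : |(‖x - y‖ ^ 2)⁻¹ * (if j = k then (1:ℝ) else 0)| ≤ 1 / ‖x - y‖ ^ 2 := by
    split_ifs <;> simp
  calc _ ≤ _ := abs_add_le _ _
    _ ≤ 2 / ‖x - y‖ ^ 2 + 1 / ‖x - y‖ ^ 2 := add_le_add a1 a2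
    _ = _ := by ring


noncomputable def chi : ContDiffBump (0:E2) := ⟨5/16, 7/16, by norm_num, by norm_num⟩

theorem chi_one {y : E2} (h : ‖y‖ ≤ 5/16) : chi y = 1 := chi.one_of_mem_closedBall (by simpa [chi] using h)
theorem chi_zero {y : E2} (h : 7/16 ≤ ‖y‖) : chi y = 0 := chi.zero_of_le_dist (by simpa [chi] using h)
theorem chi_contDiff : ContDiff ℝ 3 chi := chi.contDiff
theorem chi_ev_one {y : E2} (h : ‖y‖ < 5/16) : chi =ᶠ[nhds y] fun _ => 1 := by
  filter_upwards [(isOpen_lt continuous_norm continuous_const).mem_nhds h] with w hw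
  exact chi_one (le_of_lt hw)
theorem chi_ev_zero {y : E2} (h : 7/16 < ‖y‖) : chi =ᶠ[nhds y] fun _ => 0 := by
  filter_upwards [(isOpen_lt continuous_const continuous_norm).mem_nhds h] with w hw
  exact chi_zero (le_of_lt hw)

theorem pd_const' (c : ℝ) (j : Fin 2) : pd j (fun _ => c) = fun _ => 0 := by
  ext x; simp [pd]

theorem pd_chi_zero {y : E2} (h : ‖y‖ < 5/16 ∨ 7/16 < ‖y‖) (k : Fin 2) : pd k chi =ᶠ[nhds y] fun _ => 0 := by
  rcases h with h | h
  · have := pd_congr (chi_ev_one h) k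
    rwa [pd_const'] at this
  · have := pd_congr (chi_ev_zero h) k
    rwa [pd_const'] at this

theorem comm_bound : ∃ C > (0:ℝ), ∀ z : E2 → ℝ, ContDiff ℝ 2 z → ∀ y : E2, ‖y‖ ≤ 1/4 → ∀ j k : Fin 2,
    Integrable (fun ξ => KK j (ξ - y) * (z ξ * pd k (pd k chi) ξ + 2 * (pd k chi ξ * pd k z ξ))) ∧
    |∫ ξ, KK j (ξ - y) * (z ξ * pd k (pd k chi) ξ + 2 * (pd k chi ξ * pd k z ξ))|
      ≤ C * ∫ ξ in {ξ : E2 | ‖ξ‖ ∈ Set.Icc (5/16:ℝ) (7/16)}, |z ξ| := by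
  have hc2 : ContDiff ℝ 2 chi := chi.contDiff
  have hcp : ∀ k, ContDiff ℝ 1 (pd k chi) := fun k => pd_contDiff hc2 k
  have hM : ∃ M : ℝ, 0 < M ∧ ∀ k : Fin 2, ∀ ξ ∈ closedBall (0:E2) 1, |pd k chi ξ| ≤ M ∧ |pd k (pd k chi) ξ| ≤ M := by
    have : ∀ k : Fin 2, ∃ M : ℝ, 0 < M ∧ ∀ ξ ∈ closedBall (0:E2) 1, |pd k chi ξ| ≤ M ∧ |pd k (pd k chi) ξ| ≤ M := by
      intro k
      obtain ⟨M1, h1⟩ := (isCompact_closedBall (0:E2) 1).exists_bound_of_continuousOn (hcp k).continuous.continuousOn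
      obtain ⟨M2, h2⟩ := (isCompact_closedBall (0:E2) 1).exists_bound_of_continuousOn (pd2_continuous hc2 k k).continuousOn
      refine ⟨max 1 (max M1 M2), by positivity, fun ξ hξ => ⟨(h1 ξ hξ).trans ?_, (h2 ξ hξ).trans ?_⟩⟩ <;> simp
    choose M hM0 hM using this
    refine ⟨max (M 0) (M 1), lt_max_of_lt_left (hM0 0), fun k ξ hξ => ?_⟩
    fin_cases k
    · exact ⟨((hM 0 ξ hξ).1).trans (le_max_left _ _), ((hM 0 ξ hξ).2).trans (le_max_left _ _)⟩
    · exact ⟨((hM 1 ξ hξ).1).trans (le_max_right _ _), ((hM 1 ξ hξ).2).trans (le_max_right _ _)⟩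
  obtain ⟨M, hM0, hM⟩ := hM
  refine ⟨2000 * M, by positivity, ?_⟩
  intro z hz y hy j k
  -- the cut-off kernel
  set f : E2 → ℝ := fun ξ => KK j (ξ - y) * pd k chi ξ with hfdef
  have hne : ∀ ξ : E2, 5/16 ≤ ‖ξ‖ → ξ ≠ y ∧ 1/16 ≤ ‖ξ - y‖ := by
    intro ξ hξ
    have : ‖ξ‖ - ‖y‖ ≤ ‖ξ - y‖ := norm_sub_norm_le ξ y
    have h2 : 1/16 ≤ ‖ξ - y‖ := by linarith
    refine ⟨fun h => ?_, h2⟩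
    rw [h, sub_self, norm_zero] at h2; norm_num at h2
  have hfz : ∀ ξ : E2, (‖ξ‖ < 5/16 ∨ 7/16 < ‖ξ‖) → f =ᶠ[nhds ξ] fun _ => 0 := by
    intro ξ hξ
    filter_upwards [pd_chi_zero hξ k] with w hw
    simp [hfdef, hw]
  have hf : ContDiff ℝ 1 f := by
    rw [contDiff_iff_contDiffAt]
    intro ξ
    by_cases h : ‖ξ‖ < 5/16
    · exact contDiffAt_const.congr_of_eventuallyEq (hfz ξ (Or.inl h))
    · exact (pd_KK (hne ξ (not_lt.1 h)).1 j k).1.mul (hcp k).contDiffAt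
  set g : E2 → ℝ := fun ξ => KK j (ξ - y) * pd k (pd k chi) ξ with hgdef
  have hgz : ∀ ξ : E2, (‖ξ‖ < 5/16 ∨ 7/16 < ‖ξ‖) → g =ᶠ[nhds ξ] fun _ => 0 := by
    intro ξ hξ
    have := pd_congr (pd_chi_zero hξ k) k
    rw [pd_const'] at this
    filter_upwards [this] with w hw
    simp [hgdef, hw]
  have hg : Continuous g := by
    rw [continuous_iff_continuousAt]
    intro ξ
    by_cases h : ‖ξ‖ < 5/16
    · exact continuousAt_const.congr (hgz ξ (Or.inl h)).symm
    · exact (pd_KK (hne ξ (not_lt.1 h)).1 j k).1.continuousAt.mul (pd2_continuous hc2 k k).continuousAt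
  have hpf : Continuous (pd k f) := pd_continuous hf k
  have hpfz : ∀ ξ : E2, (‖ξ‖ < 5/16 ∨ 7/16 < ‖ξ‖) → pd k f ξ = 0 := by
    intro ξ hξ
    have := (pd_congr (hfz ξ hξ) k).eq_of_nhds
    rw [this, pd_const']
  have supp : ∀ w : E2 → ℝ, (∀ ξ : E2, (‖ξ‖ < 5/16 ∨ 7/16 < ‖ξ‖) → w ξ = 0) → Continuous w → Integrable w := by
    intro w hw hcw
    refine hcw.integrable_of_hasCompactSupport ?_
    refine HasCompactSupport.intro (isCompact_closedBall (0:E2) (7/16)) fun ξ hξ => hw ξ (Or.inr ?_)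
    simpa using hξ
  have hzc := hz.continuous
  have hzp := (pd_contDiff hz k).continuous
  have i1 : Integrable (fun ξ => pd k f ξ * z ξ) := supp _ (fun ξ hξ => by simp [hpfz ξ hξ]) (hpf.mul hzc)
  have i2 : Integrable (fun ξ => f ξ * pd k z ξ) := supp _ (fun ξ hξ => by simp [(hfz ξ hξ).eq_of_nhds]) (hf.continuous.mul hzp)
  have i3 : Integrable (fun ξ => f ξ * z ξ) := supp _ (fun ξ hξ => by simp [(hfz ξ hξ).eq_of_nhds]) (hf.continuous.mul hzc)
  have i4 : Integrable (fun ξ => g ξ * z ξ) := supp _ (fun ξ hξ => by simp [(hgz ξ hξ).eq_of_nhds]) (hg.mul hzc)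
  have ibp : ∫ ξ, f ξ * pd k z ξ = - ∫ ξ, pd k f ξ * z ξ :=
    integral_mul_fderiv_eq_neg_fderiv_mul_of_integrable i1 i2 i3
      (fun x _ => hf.differentiable (by norm_num) x) (fun x _ => hz.differentiable (by norm_num) x)
  have e1 : (fun ξ => KK j (ξ - y) * (z ξ * pd k (pd k chi) ξ + 2 * (pd k chi ξ * pd k z ξ))) =
      fun ξ => g ξ * z ξ + 2 * (f ξ * pd k z ξ) := by
    ext ξ; simp only [hgdef, hfdef]; ring
  rw [e1]
  refine ⟨i4.add (i2.const_mul 2), ?_⟩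
  rw [integral_add i4 (i2.const_mul 2), integral_const_mul, ibp]
  have e2 : ∫ ξ, g ξ * z ξ + 2 * -(pd k f ξ * z ξ) = (∫ ξ, g ξ * z ξ) + 2 * (- ∫ ξ, pd k f ξ * z ξ) := by
    rw [integral_add i4 (i1.fun_neg.const_mul 2), integral_const_mul, integral_neg]
  rw [← e2]
  have hA : MeasurableSet {ξ : E2 | ‖ξ‖ ∈ Set.Icc (5/16:ℝ) (7/16)} := measurable_norm measurableSet_Icc
  have hint : IntegrableOn (fun ξ => |z ξ|) {ξ : E2 | ‖ξ‖ ∈ Set.Icc (5/16:ℝ) (7/16)} := by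
    refine (hzc.abs.continuousOn.integrableOn_compact (isCompact_closedBall (0:E2) (7/16))).mono_set ?_
    intro ξ hξ; simpa using hξ.2
  rw [← integral_indicator hA, ← integral_const_mul]
  rw [← Real.norm_eq_abs]
  refine norm_integral_le_of_norm_le (((integrable_indicator_iff hA).2 hint).const_mul _) ?_
  filter_upwards with ξ
  by_cases h : ‖ξ‖ ∈ Set.Icc (5/16:ℝ) (7/16)
  · rw [Set.indicator_of_mem (by exact h)]
    have hb := hne ξ h.1
    have hξ1 : ξ ∈ closedBall (0:E2) 1 := by simp; linarith [h.2]
    obtain ⟨m1, m2⟩ := hM k ξ hξ1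
    have hK := pd_KK hb.1 j k
    have e3 : pd k f ξ = KK j (ξ - y) * pd k (pd k chi) ξ + pd k chi ξ * pd k (fun η => KK j (η - y)) ξ :=
      pd_mul (hK.1.differentiableAt (by norm_num)) ((hcp k).differentiable (by norm_num) ξ) k
    have k1 : |KK j (ξ - y)| ≤ 16 := by
      refine (abs_KK_le j _).trans ?_
      rw [inv_le_comm₀ (by linarith) (by norm_num)]; linarith [hb.2]
    have k2 : |pd k (fun η => KK j (η - y)) ξ| ≤ 768 := by
      refine hK.2.trans ?_
      rw [div_le_iff₀ (by nlinarith [hb.2])]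
      nlinarith [hb.2]
    have e4 : g ξ * z ξ + 2 * -(pd k f ξ * z ξ) = (-(KK j (ξ - y) * pd k (pd k chi) ξ) - 2 * (pd k chi ξ * pd k (fun η => KK j (η - y)) ξ)) * z ξ := by
      rw [e3, hgdef]; ring
    rw [e4, Real.norm_eq_abs, abs_mul]
    gcongr
    calc _ ≤ |KK j (ξ - y) * pd k (pd k chi) ξ| + 2 * |pd k chi ξ * pd k (fun η => KK j (η - y)) ξ| := by
          refine (abs_sub _ _).trans ?_
          rw [abs_neg, abs_mul 2]; simp
      _ ≤ 16 * M + 2 * (M * 768) := by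
          rw [abs_mul, abs_mul]; gcongr
      _ ≤ _ := by linarith
  · rw [Set.indicator_of_notMem (by exact h)]
    have h' : ‖ξ‖ < 5/16 ∨ 7/16 < ‖ξ‖ := by
      by_contra hh; push Not at hh; exact h ⟨hh.1, hh.2⟩
    simp [hpfz ξ h', (hgz ξ h').eq_of_nhds]

theorem L4 : ∃ C > (0:ℝ), ∀ z : E2 → ℝ, ContDiff ℝ 2 z → ∀ y : E2, ‖y‖ ≤ 1/4 → ∀ j : Fin 2,
    |pd j z y + (1 / (2 * Real.pi)) * ∫ ξ, KK j (y - ξ) * (chi ξ * - lapl z ξ)|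
      ≤ C * ∫ ξ in {ξ : E2 | ‖ξ‖ ∈ Set.Icc (5/16:ℝ) (7/16)}, |z ξ| := by
  obtain ⟨C, hC, H⟩ := comm_bound
  refine ⟨C, hC, fun z hz y hy j => ?_⟩
  have hc2 : ContDiff ℝ 2 chi := chi.contDiff
  have hg : ContDiff ℝ 2 (fun ξ => chi ξ * z ξ) := hc2.mul hz
  have hgc : HasCompactSupport (fun ξ => chi ξ * z ξ) := chi.hasCompactSupport.mul_right
  have h1 := repA hg hgc y j
  have h2 : pd j (fun ξ => chi ξ * z ξ) y = pd j z y := by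
    refine (pd_congr ?_ j).eq_of_nhds
    filter_upwards [chi_ev_one (show ‖y‖ < 5/16 by linarith)] with w hw
    simp [hw]
  have h3 : ∫ η, KK j η * lapl (fun ξ => chi ξ * z ξ) (y + η) = ∫ ξ, KK j (ξ - y) * lapl (fun ξ => chi ξ * z ξ) ξ := by
    rw [← integral_add_left_eq_self (fun ξ => KK j (ξ - y) * lapl (fun ξ => chi ξ * z ξ) ξ) y]
    simp
  obtain ⟨I0, B0⟩ := H z hz y hy j 0
  obtain ⟨I1, B1⟩ := H z hz y hy j 1
  have hlc := lapl_continuous hz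
  have hJi : Integrable (fun ξ => chi ξ * - lapl z ξ) := by
    refine (hc2.continuous.mul hlc.neg).integrable_of_hasCompactSupport chi.hasCompactSupport.mul_right
  obtain ⟨M, hM⟩ := (isCompact_closedBall y 1).exists_bound_of_continuousOn (hc2.continuous.mul hlc.neg).continuousOn
  have hJ := KK_mul_integrable hJi y one_pos (fun w hw => hM w (ball_subset_closedBall hw)) j
  have e : (fun ξ => KK j (ξ - y) * lapl (fun ξ => chi ξ * z ξ) ξ) = fun ξ =>
      KK j (y - ξ) * (chi ξ * - lapl z ξ) + (KK j (ξ - y) * (z ξ * pd 0 (pd 0 chi) ξ + 2 * (pd 0 chi ξ * pd 0 z ξ))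
       + KK j (ξ - y) * (z ξ * pd 1 (pd 1 chi) ξ + 2 * (pd 1 chi ξ * pd 1 z ξ))) := by
    ext ξ
    rw [lapl_mul hc2 hz, ← neg_sub ξ y, KK_neg, lapl.eq_1 chi]; ring
  rw [h2, h3, e, integral_add hJ (I0.fun_add I1), integral_add I0 I1] at h1
  rw [h1]
  set J := ∫ ξ, KK j (y - ξ) * (chi ξ * - lapl z ξ)
  set X := ∫ ξ, KK j (ξ - y) * (z ξ * pd 0 (pd 0 chi) ξ + 2 * (pd 0 chi ξ * pd 0 z ξ))
  set Y := ∫ ξ, KK j (ξ - y) * (z ξ * pd 1 (pd 1 chi) ξ + 2 * (pd 1 chi ξ * pd 1 z ξ))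
  have : -(1 / (2 * Real.pi)) * (J + (X + Y)) + 1 / (2 * Real.pi) * J = -(1 / (2 * Real.pi)) * (X + Y) := by ring
  rw [this, abs_mul, abs_neg, abs_of_pos (by positivity)]
  have h5 := abs_add_le X Y
  have h6 : 1 / (2 * Real.pi) ≤ 1 / 2 := by
    apply one_div_le_one_div_of_le (by norm_num); nlinarith [Real.pi_gt_three]
  calc 1 / (2 * Real.pi) * |X + Y| ≤ 1 / 2 * |X + Y| := by gcongr
    _ ≤ _ := by linarith

theorem L4s : ∃ C > (0:ℝ), ∀ z : E2 → ℝ, ContDiff ℝ 2 z → ∀ R > (0:ℝ), ∀ x : E2, ‖x‖ ≤ R / 4 → ∀ j : Fin 2,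
    |pd j z x + (1 / (2 * Real.pi)) * ∫ ξ, KK j (x - ξ) * (chi (R⁻¹ • ξ) * - lapl z ξ)|
      ≤ C / R * ∫ ξ in {ξ : E2 | ‖ξ‖ ∈ Set.Icc (5/16:ℝ) (7/16)}, |z (R • ξ)| := by
  obtain ⟨C, hC, H⟩ := L4
  refine ⟨C, hC, fun z hz R hR x hx j => ?_⟩
  have hzR : ContDiff ℝ 2 (fun y : E2 => z (0 + R • y) + 0) := by
    have : ContDiff ℝ 2 (fun y : E2 => 0 + R • y) := by fun_prop
    exact (hz.comp this).add contDiff_const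
  have h := H _ hzR (R⁻¹ • x) (by rw [norm_smul, Real.norm_eq_abs, abs_inv, abs_of_pos hR, inv_mul_le_iff₀ hR]; linarith) j
  rw [pd_comp_affine z 0 R 0 hR.ne'] at h
  simp only [lapl_comp_affine z 0 R 0 hR.ne'] at h
  simp only [zero_add, add_zero, smul_inv_smul₀ hR.ne'] at h
  have e : ∫ ξ, KK j (R⁻¹ • x - ξ) * (chi ξ * -(R ^ 2 * lapl z (R • ξ))) = R * ∫ ξ, KK j (x - ξ) * (chi (R⁻¹ • ξ) * - lapl z ξ) := by
    have := Measure.integral_comp_smul volume (fun ξ : E2 => KK j (x - ξ) * (chi (R⁻¹ • ξ) * - lapl z ξ)) R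
    simp only [finrank_euclideanSpace, Fintype.card_fin, smul_eq_mul] at this
    rw [abs_of_pos (by positivity)] at this
    have h2 : ∫ ξ, KK j (x - ξ) * (chi (R⁻¹ • ξ) * - lapl z ξ) = R ^ 2 * ∫ ξ, KK j (x - R • ξ) * (chi (R⁻¹ • R • ξ) * - lapl z (R • ξ)) := by
      rw [this]; field_simp
    rw [h2, ← mul_assoc, ← integral_const_mul]
    congr 1; ext ξ
    rw [inv_smul_smul₀ hR.ne']
    have : R⁻¹ • x - ξ = R⁻¹ • (x - R • ξ) := by rw [smul_sub, inv_smul_smul₀ hR.ne']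
    rw [this, KK_smul j (inv_ne_zero hR.ne'), inv_inv]; ring
  rw [e] at h
  have h3 : R * pd j z x + 1 / (2 * Real.pi) * (R * ∫ ξ, KK j (x - ξ) * (chi (R⁻¹ • ξ) * - lapl z ξ)) = 
    R * (pd j z x + (1 / (2 * Real.pi)) * ∫ ξ, KK j (x - ξ) * (chi (R⁻¹ • ξ) * - lapl z ξ)) := by ring
  rw [h3, abs_mul, abs_of_pos hR] at h
  rw [div_mul_eq_mul_div C, le_div_iff₀ hR]; linarith


theorem KK_sub_le {x y : E2} (hx : x ≠ 0) (hxy : x - y ≠ 0) (j : Fin 2) :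
    |KK j (x - y) - KK j x| ≤ ‖y‖ / (‖x‖ * ‖x - y‖) := by
  have h := dist_div_norm_sq_smul hxy hx 1
  have e : KK j (x - y) - KK j x = ((1 / ‖x - y‖) ^ 2 • (x - y) - (1 / ‖x‖) ^ 2 • x : E2) j := by
    simp only [KK, PiLp.sub_apply, PiLp.smul_apply, smul_eq_mul]; ring
  rw [e]
  refine (abs_coord_le _ j).trans ?_
  rw [← dist_eq_norm, h, dist_eq_norm]
  have : x - y - x = -y := by abel
  rw [this, norm_neg]
  apply le_of_eq; ring

theorem lemB {f : E2 → ℝ} (hf : Integrable f) (h0 : ∀ y, 0 ≤ f y) {x : E2} {k η D M : ℝ} (hk : 0 < k)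
    (hx : 2 * k ≤ ‖x‖) (htail : ∫ y in {y : E2 | k ≤ ‖y‖}, f y ≤ η) (hM : ∫ y, f y ≤ M)
    (hD : ∀ y ∈ ball x (‖x‖ / 2), f y ≤ D / ‖x‖ ^ 2) (j : Fin 2) :
    |(∫ y, KK j (x - y) * f y) - (∫ y, f y) * KK j x| ≤ (2 * k * M / ‖x‖ + 3 * η + Real.pi * D) / ‖x‖ := by
  have hxp : 0 < ‖x‖ := by linarith
  have hx0 : x ≠ 0 := norm_pos_iff.1 hxp
  have hm : MeasurableSet {y : E2 | k ≤ ‖y‖} := measurableSet_le measurable_const measurable_norm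
  have hK := KK_mul_integrable hf x (t := ‖x‖ / 2) (by positivity) (fun y hy => by rw [abs_of_nonneg (h0 y)]; exact hD y hy) j
  rw [← integral_mul_const, ← integral_sub hK (hf.mul_const _)]
  have hI1 : Integrable (fun y => 2 * k / ‖x‖ ^ 2 * f y) := hf.const_mul _
  have hI2 : Integrable (fun y => 3 / ‖x‖ * ({y : E2 | k ≤ ‖y‖}).indicator f y) := (hf.indicator hm).const_mul _
  have hinv := inv_norm_int x (‖x‖ / 2) (by positivity)
  have hI3 : Integrable (fun y => D / ‖x‖ ^ 2 * (ball x (‖x‖ / 2)).indicator (fun y => ‖x - y‖⁻¹) y) :=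
    ((integrable_indicator_iff measurableSet_ball).2 hinv.1).const_mul _
  have hD0 : 0 ≤ D / ‖x‖ ^ 2 := (h0 x).trans (hD x (mem_ball_self (by positivity)))
  have key : ‖∫ y, KK j (x - y) * f y - f y * KK j x‖ ≤ ∫ y, (2 * k / ‖x‖ ^ 2 * f y + 3 / ‖x‖ * ({y : E2 | k ≤ ‖y‖}).indicator f y
      + D / ‖x‖ ^ 2 * (ball x (‖x‖ / 2)).indicator (fun y => ‖x - y‖⁻¹) y) := by
    refine norm_integral_le_of_norm_le ((hI1.fun_add hI2).fun_add hI3) ?_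
    filter_upwards with y
    have e : KK j (x - y) * f y - f y * KK j x = (KK j (x - y) - KK j x) * f y := by ring
    rw [e, Real.norm_eq_abs, abs_mul, abs_of_nonneg (h0 y)]
    have p1 : 0 ≤ 2 * k / ‖x‖ ^ 2 * f y := mul_nonneg (by positivity) (h0 y)
    have p2 : 0 ≤ 3 / ‖x‖ * ({y : E2 | k ≤ ‖y‖}).indicator f y := mul_nonneg (by positivity) (Set.indicator_nonneg (fun y _ => h0 y) y)
    have p3 : 0 ≤ D / ‖x‖ ^ 2 * (ball x (‖x‖ / 2)).indicator (fun y => ‖x - y‖⁻¹) y :=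
      mul_nonneg hD0 (Set.indicator_nonneg (fun y _ => by positivity) y)
    have tri : ‖x‖ - ‖y‖ ≤ ‖x - y‖ := norm_sub_norm_le x y
    by_cases hy : k ≤ ‖y‖
    · have a : |KK j (x - y) - KK j x| ≤ ‖x - y‖⁻¹ + ‖x‖⁻¹ := (abs_sub _ _).trans (add_le_add (abs_KK_le _ _) (abs_KK_le _ _))
      rw [Set.indicator_of_mem (by exact hy)] at p2 ⊢
      by_cases hyb : y ∈ ball x (‖x‖ / 2)
      · rw [Set.indicator_of_mem hyb] at p3 ⊢
        calc _ ≤ (‖x - y‖⁻¹ + ‖x‖⁻¹) * f y := mul_le_mul_of_nonneg_right a (h0 y)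
          _ = ‖x - y‖⁻¹ * f y + 1 / ‖x‖ * f y := by ring
          _ ≤ ‖x - y‖⁻¹ * (D / ‖x‖ ^ 2) + 3 / ‖x‖ * f y := by
            have := hD y hyb
            have := h0 y
            gcongr; norm_num
          _ ≤ _ := by linarith
      · have hb : ‖x‖ / 2 ≤ ‖x - y‖ := by
          rw [mem_ball, dist_comm, dist_eq_norm] at hyb; linarith
        have : ‖x - y‖⁻¹ ≤ 2 / ‖x‖ := by
          rw [inv_le_comm₀ (by linarith) (by positivity), inv_div]; exact hb
        calc _ ≤ (‖x - y‖⁻¹ + ‖x‖⁻¹) * f y := mul_le_mul_of_nonneg_right a (h0 y)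
          _ ≤ (2 / ‖x‖ + ‖x‖⁻¹) * f y := mul_le_mul_of_nonneg_right (by linarith) (h0 y)
          _ = 3 / ‖x‖ * f y := by field_simp; ring
          _ ≤ _ := by linarith
    · push Not at hy
      have hb : ‖x‖ / 2 ≤ ‖x - y‖ := by linarith
      have hbp : 0 < ‖x - y‖ := by linarith
      have := KK_sub_le hx0 (norm_pos_iff.1 hbp) j
      calc _ ≤ ‖y‖ / (‖x‖ * ‖x - y‖) * f y := mul_le_mul_of_nonneg_right this (h0 y)
        _ ≤ 2 * k / ‖x‖ ^ 2 * f y := by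
          apply mul_le_mul_of_nonneg_right _ (h0 y)
          rw [div_le_div_iff₀ (by positivity) (by positivity)]
          have : ‖y‖ * ‖x‖ ^ 2 ≤ k * ‖x‖ ^ 2 := by gcongr
          have : k * ‖x‖ * (‖x‖ / 2) ≤ k * ‖x‖ * ‖x - y‖ := by gcongr
          linarith
        _ ≤ _ := by linarith
  rw [Real.norm_eq_abs] at key
  refine key.trans ?_
  rw [integral_add (hI1.fun_add hI2) hI3, integral_add hI1 hI2, integral_const_mul, integral_const_mul, integral_const_mul,
    integral_indicator hm, integral_indicator measurableSet_ball, hinv.2]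
  have b1 : 2 * k / ‖x‖ ^ 2 * ∫ y, f y ≤ 2 * k / ‖x‖ ^ 2 * M := by gcongr
  have b2 : 3 / ‖x‖ * ∫ y in {y : E2 | k ≤ ‖y‖}, f y ≤ 3 / ‖x‖ * η := by gcongr
  calc _ ≤ 2 * k / ‖x‖ ^ 2 * M + 3 / ‖x‖ * η + D / ‖x‖ ^ 2 * (2 * Real.pi * (‖x‖ / 2)) := by linarith
    _ = _ := by field_simp

theorem lemAbs {f : E2 → ℝ} (hf : Integrable f) (h0 : ∀ y, 0 ≤ f y) {D : ℝ} (hD : ∀ y, f y * ‖y‖ ^ 2 ≤ D) (x : E2) :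
    Integrable (fun y => ‖x‖ * (‖x - y‖⁻¹ * f y)) ∧ ∫ y, ‖x‖ * (‖x - y‖⁻¹ * f y) ≤ 2 * (∫ y, f y) + 4 * Real.pi * D := by
  have hD0 : 0 ≤ D := (by simpa using hD 0)
  have hM0 : 0 ≤ ∫ y, f y := integral_nonneg h0
  rcases eq_or_ne x 0 with rfl | hx
  · simp; positivity
  have hxp : 0 < ‖x‖ := norm_pos_iff.2 hx
  have hb : ∀ y ∈ ball x (‖x‖ / 2), f y ≤ 4 * D / ‖x‖ ^ 2 := by
    intro y hy
    rw [mem_ball, dist_comm, dist_eq_norm] at hy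
    have tri : ‖x‖ - ‖y‖ ≤ ‖x - y‖ := norm_sub_norm_le x y
    rw [le_div_iff₀ (by positivity)]
    have : ‖x‖ ^ 2 ≤ (2 * ‖y‖) ^ 2 := by gcongr; linarith
    nlinarith [hD y, h0 y]
  have hI := (inv_norm_mul_integrable hf x (t := ‖x‖ / 2) (by positivity)
    (fun y hy => by rw [abs_of_nonneg (h0 y)]; exact hb y hy)).const_mul ‖x‖
  refine ⟨hI, ?_⟩
  have hinv := inv_norm_int x (‖x‖ / 2) (by positivity)
  have hI3 : Integrable (fun y => 4 * D / ‖x‖ * (ball x (‖x‖ / 2)).indicator (fun y => ‖x - y‖⁻¹) y) :=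
    ((integrable_indicator_iff measurableSet_ball).2 hinv.1).const_mul _
  calc _ ≤ ∫ y, (2 * f y + 4 * D / ‖x‖ * (ball x (‖x‖ / 2)).indicator (fun y => ‖x - y‖⁻¹) y) := by
        refine integral_mono hI ((hf.const_mul 2).fun_add hI3) fun y => ?_
        simp only
        by_cases hyb : y ∈ ball x (‖x‖ / 2)
        · rw [Set.indicator_of_mem hyb]
          have : ‖x‖ * (‖x - y‖⁻¹ * f y) ≤ ‖x‖ * (‖x - y‖⁻¹ * (4 * D / ‖x‖ ^ 2)) := by
            have := hb y hyb; gcongr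
          have e : ‖x‖ * (‖x - y‖⁻¹ * (4 * D / ‖x‖ ^ 2)) = 4 * D / ‖x‖ * ‖x - y‖⁻¹ := by field_simp
          linarith [h0 y]
        · rw [Set.indicator_of_notMem hyb]
          have hb : ‖x‖ / 2 ≤ ‖x - y‖ := by
            rw [mem_ball, dist_comm, dist_eq_norm] at hyb; linarith
          have : ‖x - y‖⁻¹ ≤ 2 / ‖x‖ := by
            rw [inv_le_comm₀ (by linarith) (by positivity), inv_div]; exact hb
          calc _ ≤ ‖x‖ * (2 / ‖x‖ * f y) := by have := h0 y; gcongr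
            _ = _ := by field_simp; try ring
    _ = _ := by
        rw [integral_add (hf.const_mul 2) hI3, integral_const_mul, integral_const_mul, integral_indicator measurableSet_ball, hinv.2]
        field_simp
        try ring

theorem poho_sym {f : E2 → ℝ} (hf : Integrable f) (hfc : Continuous f) (h0 : ∀ y, 0 ≤ f y) {D : ℝ} (hD : ∀ y, f y * ‖y‖ ^ 2 ≤ D) :
    ∫ x : E2, (x 0 * (∫ y, KK 0 (x - y) * f y) + x 1 * ∫ y, KK 1 (x - y) * f y) * f x = (∫ y, f y) ^ 2 / 2 := by
  set G : E2 × E2 → ℝ := fun p => (p.1 0 * KK 0 (p.1 - p.2) + p.1 1 * KK 1 (p.1 - p.2)) * (f p.2 * f p.1) with hG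
  set H : E2 × E2 → ℝ := fun p => 2 * (‖p.1‖ * (‖p.1 - p.2‖⁻¹ * f p.2) * f p.1) with hH
  have kind : ∀ (j : Fin 2) (x : E2), Integrable (fun y => KK j (x - y) * f y) := by
    intro j x
    obtain ⟨M, hM⟩ := (isCompact_closedBall x 1).exists_bound_of_continuousOn hfc.continuousOn
    exact KK_mul_integrable hf x one_pos (fun w hw => hM w (ball_subset_closedBall hw)) j
  have hGm : Measurable G := by
    have k0 : Measurable fun p : E2 × E2 => KK 0 (p.1 - p.2) := (KK_measurable 0).comp (by fun_prop)
    have k1 : Measurable fun p : E2 × E2 => KK 1 (p.1 - p.2) := (KK_measurable 1).comp (by fun_prop)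
    have := hfc.measurable
    fun_prop
  have hHm : Measurable H := by
    have := hfc.measurable
    fun_prop
  have hHi : Integrable H (volume.prod volume) := by
    rw [integrable_prod_iff hHm.aestronglyMeasurable]
    constructor
    · filter_upwards with x
      exact (((lemAbs hf h0 hD x).1.mul_const (f x)).const_mul 2)
    · have e : (fun x => ∫ y, ‖H (x, y)‖) = fun x => 2 * ((∫ y, ‖x‖ * (‖x - y‖⁻¹ * f y)) * f x) := by
        ext x
        rw [← integral_mul_const, ← integral_const_mul]
        congr 1; ext y
        rw [Real.norm_eq_abs, abs_of_nonneg]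
        have := h0 x; have := h0 y
        simp only [hH]; positivity
      have hmeas := hHm.aestronglyMeasurable (μ := (volume : Measure E2).prod (volume : Measure E2)).norm.integral_prod_right'
      refine (hf.const_mul (2 * (2 * (∫ y, f y) + 4 * Real.pi * D))).mono' hmeas ?_
      filter_upwards with x
      rw [congrFun e x, Real.norm_eq_abs, abs_of_nonneg]
      · have := (lemAbs hf h0 hD x).2
        have := h0 x
        calc 2 * ((∫ y, ‖x‖ * (‖x - y‖⁻¹ * f y)) * f x) ≤ 2 * ((2 * (∫ y, f y) + 4 * Real.pi * D) * f x) := by gcongr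
          _ = _ := by ring
      · refine mul_nonneg (by norm_num) (mul_nonneg (integral_nonneg fun y => ?_) (h0 x))
        have := h0 y; positivity
  have hGi : Integrable G (volume.prod volume) := by
    refine hHi.mono' hGm.aestronglyMeasurable ?_
    filter_upwards with p
    have q0 := h0 p.1; have q1 := h0 p.2
    rw [Real.norm_eq_abs, hG, hH]
    simp only
    rw [abs_mul, abs_of_nonneg (mul_nonneg q1 q0)]
    have a : |p.1 0 * KK 0 (p.1 - p.2) + p.1 1 * KK 1 (p.1 - p.2)| ≤ 2 * (‖p.1‖ * ‖p.1 - p.2‖⁻¹) := by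
      refine (abs_add_le _ _).trans ?_
      rw [abs_mul, abs_mul, two_mul]
      have := abs_coord_le p.1 0
      have := abs_coord_le p.1 1
      have := abs_KK_le 0 (p.1 - p.2)
      have := abs_KK_le 1 (p.1 - p.2)
      gcongr
    calc _ ≤ 2 * (‖p.1‖ * ‖p.1 - p.2‖⁻¹) * (f p.2 * f p.1) := by gcongr
      _ = _ := by ring
  have e1 : ∫ x : E2, (x 0 * (∫ y, KK 0 (x - y) * f y) + x 1 * ∫ y, KK 1 (x - y) * f y) * f x = ∫ p, G p ∂(volume.prod volume) := by
    rw [integral_prod _ hGi]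
    congr 1; ext x
    rw [← integral_const_mul, ← integral_const_mul, ← integral_add ((kind 0 x).const_mul _) ((kind 1 x).const_mul _), ← integral_mul_const]
    congr 1; ext y
    simp only [hG]; ring
  rw [e1]
  have e2 : ∫ p : E2 × E2, G p.swap ∂(volume.prod volume) = ∫ p, G p ∂(volume.prod volume) := integral_prod_swap G
  have e3 : (∫ p, G p ∂(volume.prod volume)) + ∫ p : E2 × E2, G p.swap ∂(volume.prod volume) = (∫ y, f y) * ∫ y, f y := by
    have hGs : Integrable (fun p : E2 × E2 => G p.swap) (volume.prod volume) := hGi.swap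
    rw [← integral_add hGi hGs, ← integral_prod_mul]
    rw [integral_prod _ (hGi.fun_add hGs), integral_prod _ (hf.mul_prod hf)]
    congr 1; ext x
    refine integral_congr_ae ?_
    have : ∀ᵐ y : E2, y ≠ x := by
      rw [ae_iff]; simp
    filter_upwards [this] with y hy
    have hne : x - y ≠ 0 := sub_ne_zero.2 hy.symm
    have hp : 0 < ‖x - y‖ := norm_pos_iff.2 hne
    have hn : ‖x - y‖ ^ 2 = (x - y) 0 ^ 2 + (x - y) 1 ^ 2 := by
      rw [EuclideanSpace.norm_sq_eq]; simp
    simp only [hG, Prod.swap, Function.comp_apply]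
    rw [← neg_sub x y, KK_neg, KK_neg]
    have : x 0 * KK 0 (x - y) + x 1 * KK 1 (x - y) + (y 0 * -KK 0 (x - y) + y 1 * -KK 1 (x - y)) = 1 := by
      have : x 0 * KK 0 (x - y) + x 1 * KK 1 (x - y) + (y 0 * -KK 0 (x - y) + y 1 * -KK 1 (x - y)) =
        ((x - y) 0 ^ 2 + (x - y) 1 ^ 2) / ‖x - y‖ ^ 2 := by
        simp only [KK, PiLp.sub_apply]; ring
      rw [this, ← hn]; field_simp
    linear_combination (f x * f y) * this
  rw [e2] at e3
  linarith


/-- bounded masses and locally uniform convergence: the limit is integrable -/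
theorem lim_integrable {F : ℕ → E2 → ℝ} {f : E2 → ℝ} (hF : ∀ i, Integrable (F i)) (h0 : ∀ i y, 0 ≤ F i y) {B : ℝ}
    (hB : ∀ i, ∫ y, F i y ≤ B) (hf : Continuous f) (hf0 : ∀ y, 0 ≤ f y)
    (hc : ∀ k : ℝ, TendstoUniformlyOn F f atTop (closedBall 0 k)) :
    Integrable f ∧ ∀ k : ℝ, Tendsto (fun i => ∫ y in closedBall (0:E2) k, F i y) atTop (nhds (∫ y in closedBall (0:E2) k, f y)) := by
  have hlim : ∀ k : ℝ, Tendsto (fun i => ∫ y in closedBall (0:E2) k, F i y) atTop (nhds (∫ y in closedBall (0:E2) k, f y)) := by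
    intro k
    rw [Metric.tendsto_atTop]
    intro e he
    set v := volume.real (closedBall (0:E2) k) with hv
    have hv0 : 0 ≤ v := measureReal_nonneg
    have h := Metric.tendstoUniformlyOn_iff.1 (hc k) (e / (2 * (v + 1))) (by positivity)
    obtain ⟨N, hN⟩ := eventually_atTop.1 h
    refine ⟨N, fun i hi => ?_⟩
    have hfi : IntegrableOn f (closedBall (0:E2) k) := hf.continuousOn.integrableOn_compact (isCompact_closedBall _ _)
    rw [dist_eq_norm, ← integral_sub (hF i).integrableOn hfi]
    have := norm_setIntegral_le_of_norm_le_const (μ := volume) (s := closedBall (0:E2) k) (f := fun y => F i y - f y) (C := e / (2 * (v + 1)))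
      (isCompact_closedBall (0:E2) k).measure_lt_top (fun y hy => by
        have := hN i hi y hy
        rw [dist_comm, dist_eq_norm] at this; exact this.le)
    refine lt_of_le_of_lt this ?_
    rw [← hv, div_mul_eq_mul_div, div_lt_iff₀ (by positivity)]
    nlinarith
  refine ⟨?_, hlim⟩
  have hb : ∀ k : ℝ, ∫ y in closedBall (0:E2) k, f y ≤ B := by
    intro k
    refine le_of_tendsto (hlim k) (Eventually.of_forall fun i => ?_)
    exact (setIntegral_le_integral (hF i) (Eventually.of_forall (h0 i))).trans (hB i)
  refine (aecover_closedBall (μ := volume) (x := (0:E2)) (l := atTop) (r := fun k : ℕ => (k:ℝ)) tendsto_natCast_atTop_atTop).integrable_of_integral_bounded_of_nonneg_ae B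
    (fun k => hf.continuousOn.integrableOn_compact (isCompact_closedBall _ _)) (Eventually.of_forall hf0) (Eventually.of_forall fun k => hb k)

theorem ball_tail {f : E2 → ℝ} (hf : Integrable f) (k : ℝ) :
    (∫ y in closedBall (0:E2) k, f y) + ∫ y in (closedBall (0:E2) k)ᶜ, f y = ∫ y, f y :=
  integral_add_compl measurableSet_closedBall hf

theorem exists_tail {f : E2 → ℝ} (hf : Integrable f) {e : ℝ} (he : 0 < e) :
    ∃ k0 : ℝ, ∀ k ≥ k0, (∫ y, f y) - e < ∫ y in closedBall (0:E2) k, f y := by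
  have := (aecover_closedBall (μ := volume) (x := (0:E2)) (l := atTop) (r := fun k : ℝ => k) tendsto_id).integral_tendsto_of_countably_generated hf
  obtain ⟨k0, h⟩ := eventually_atTop.1 (this.eventually (lt_mem_nhds (show (∫ y, f y) - e < ∫ y, f y by linarith)))
  exact ⟨k0, h⟩

theorem conv_pot {F : ℕ → E2 → ℝ} {f : E2 → ℝ} (hF : ∀ i, Integrable (F i)) (h0 : ∀ i y, 0 ≤ F i y) {B : ℝ}
    (hB : ∀ i, ∫ y, F i y ≤ B) (hf : Continuous f) (hf0 : ∀ y, 0 ≤ f y) (hfi : Integrable f) (hfB : ∫ y, f y ≤ B)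
    (hFc : ∀ i, Continuous (F i))
    (hc : ∀ k : ℝ, TendstoUniformlyOn F f atTop (closedBall 0 k)) (x : E2) (j : Fin 2) :
    Tendsto (fun i => ∫ y, KK j (x - y) * F i y) atTop (nhds (∫ y, KK j (x - y) * f y)) := by
  have hKi : ∀ g : E2 → ℝ, Continuous g → Integrable g → Integrable (fun y => KK j (x - y) * g y) := by
    intro g hg hgi
    obtain ⟨M, hM⟩ := (isCompact_closedBall x 1).exists_bound_of_continuousOn hg.continuousOn
    exact KK_mul_integrable hgi x one_pos (fun w hw => hM w (ball_subset_closedBall hw)) j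
  have hB0 : 0 ≤ B := (integral_nonneg hf0).trans hfB
  rw [Metric.tendsto_atTop]
  intro e he
  -- choose the cut radius
  set k : ℝ := ‖x‖ + (4 * B + 1) / e + 1 with hk
  have hkx : (4 * B + 1) / e ≤ k - ‖x‖ := by rw [hk]; linarith
  have hpos : 0 < k - ‖x‖ := lt_of_lt_of_le (by positivity) hkx
  have hI := inv_norm_int x (k + ‖x‖ + 1) (by have := norm_nonneg x; linarith)
  have hsub : closedBall (0:E2) k ⊆ ball x (k + ‖x‖ + 1) := by
    intro y hy
    rw [mem_closedBall_zero_iff] at hy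
    rw [mem_ball, dist_eq_norm]
    have := norm_sub_le y x
    linarith
  set W := 2 * Real.pi * (k + ‖x‖ + 1) with hW
  have hW0 : 0 ≤ W := by
    have := norm_nonneg x; have : 0 ≤ k + ‖x‖ + 1 := by linarith
    positivity
  obtain ⟨N, hN⟩ := eventually_atTop.1 (Metric.tendstoUniformlyOn_iff.1 (hc k) (e / (2 * (W + 1))) (by positivity))
  refine ⟨N, fun i hi => ?_⟩
  rw [dist_eq_norm, ← integral_sub (hKi _ (hFc i) (hF i)) (hKi _ hf hfi)]
  have hIind : Integrable (fun y => e / (2 * (W + 1)) * (ball x (k + ‖x‖ + 1)).indicator (fun y => ‖x - y‖⁻¹) y) :=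
    ((integrable_indicator_iff measurableSet_ball).2 hI.1).const_mul _
  have hbd : ‖∫ y, KK j (x - y) * F i y - KK j (x - y) * f y‖ ≤
      ∫ y, (e / (2 * (W + 1)) * (ball x (k + ‖x‖ + 1)).indicator (fun y => ‖x - y‖⁻¹) y + (k - ‖x‖)⁻¹ * (F i y + f y)) := by
    refine norm_integral_le_of_norm_le (hIind.fun_add (((hF i).fun_add hfi).const_mul _)) ?_
    filter_upwards with y
    rw [← mul_sub, Real.norm_eq_abs, abs_mul]
    have hK := abs_KK_le j (x - y)
    have q1 := h0 i y
    have q2 := hf0 y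
    by_cases hy : y ∈ closedBall (0:E2) k
    · rw [Set.indicator_of_mem (hsub hy)]
      have := hN i hi y hy
      rw [dist_comm, dist_eq_norm, Real.norm_eq_abs] at this
      have h2 : |KK j (x - y)| * |F i y - f y| ≤ ‖x - y‖⁻¹ * (e / (2 * (W + 1))) := by gcongr
      have h3 : 0 ≤ (k - ‖x‖)⁻¹ * (F i y + f y) := by positivity
      linarith
    · have h4 : k - ‖x‖ ≤ ‖x - y‖ := by
        rw [mem_closedBall_zero_iff] at hy
        have := norm_sub_norm_le y x
        rw [norm_sub_rev] at this
        linarith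
      have h5 : ‖x - y‖⁻¹ ≤ (k - ‖x‖)⁻¹ := by gcongr
      have h6 : |F i y - f y| ≤ F i y + f y := by
        rw [abs_le]; constructor <;> linarith
      have h2 : |KK j (x - y)| * |F i y - f y| ≤ (k - ‖x‖)⁻¹ * (F i y + f y) := by
        have := hK.trans h5
        gcongr
      have h3 : 0 ≤ e / (2 * (W + 1)) * (ball x (k + ‖x‖ + 1)).indicator (fun y => ‖x - y‖⁻¹) y :=
        mul_nonneg (by positivity) (Set.indicator_nonneg (fun y _ => by positivity) y)
      linarith
  refine lt_of_le_of_lt hbd ?_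
  rw [integral_add hIind (((hF i).fun_add hfi).const_mul _), integral_const_mul, integral_const_mul, integral_indicator measurableSet_ball,
    hI.2, integral_add (hF i) hfi]
  have a1 : e / (2 * (W + 1)) * W < e / 2 := by
    rw [div_mul_eq_mul_div, div_lt_div_iff₀ (by positivity) (by norm_num)]
    nlinarith
  have a2 : (k - ‖x‖)⁻¹ * ((∫ y, F i y) + ∫ y, f y) ≤ e / 2 := by
    have : (k - ‖x‖)⁻¹ * ((∫ y, F i y) + ∫ y, f y) ≤ (k - ‖x‖)⁻¹ * (2 * B) := by
      have := hB i
      gcongr; linarith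
    refine this.trans ?_
    rw [inv_mul_le_iff₀ hpos]
    rw [div_le_iff₀ he] at hkx
    linarith
  linarith

/-- eps regularity for the limit -/
theorem u0_decay {u₀ : E2 → ℝ} {V₀ : ℝ} (hV : 0 < V₀) (hu : ContDiff ℝ 2 u₀) (hpde : ∀ x, -(lapl u₀ x) = V₀ * Real.exp (u₀ x))
    {x : E2} {ρ η : ℝ} (hρ : 0 < ρ) (hη : η ≤ 1) (h : ∫ y in ball x ρ, V₀ * Real.exp (u₀ y) ≤ η) :
    V₀ * Real.exp (u₀ x) ≤ 4 * η / ρ ^ 2 := by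
  have := eps_reg (Λ := 1) one_pos hu x hρ hV (fun y _ => by rw [hpde]; constructor <;> linarith) (by simpa using hη)
    (by simpa only [hpde] using h)
  rw [hpde] at this; simpa using this

theorem pd_coord (i j : Fin 2) (x : E2) : pd j (fun y : E2 => y i) x = if i = j then 1 else 0 := by
  unfold pd
  have : HasFDerivAt (fun y : E2 => y i) (EuclideanSpace.proj i : E2 →L[ℝ] ℝ) x := (EuclideanSpace.proj i : E2 →L[ℝ] ℝ).hasFDerivAt
  rw [this.fderiv]
  simp

theorem mass_eq {u₀ : E2 → ℝ} {V₀ : ℝ} (hV : 0 < V₀) (hu : ContDiff ℝ 2 u₀) (hpde : ∀ x, -(lapl u₀ x) = V₀ * Real.exp (u₀ x))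
    (hle : ∀ x, u₀ x ≤ 0) (hi : Integrable (fun y => V₀ * Real.exp (u₀ y)))
    (hrep : ∀ j x, pd j u₀ x = -(1 / (2 * Real.pi)) * ∫ y, KK j (x - y) * (V₀ * Real.exp (u₀ y))) :
    ∫ y, V₀ * Real.exp (u₀ y) = 8 * Real.pi := by
  set f : E2 → ℝ := fun y => V₀ * Real.exp (u₀ y) with hf
  have hf2 : ContDiff ℝ 2 f := contDiff_const.mul hu.exp
  have hf0 : ∀ y, 0 < f y := fun y => by simp only [hf]; positivity
  have hfV : ∀ y, f y ≤ V₀ := fun y => by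
    have : Real.exp (u₀ y) ≤ 1 := Real.exp_le_one_iff.2 (hle y)
    simp only [hf]; nlinarith
  set M := ∫ y, f y with hM
  have hMpos : 0 < M := by
    rw [hM, integral_pos_iff_support_of_nonneg (fun y => (hf0 y).le) hi]
    have : Function.support f = Set.univ := by ext y; simp [(hf0 y).ne']
    rw [this]; simp
  -- decay
  obtain ⟨D, hD⟩ : ∃ D, ∀ y, f y * ‖y‖ ^ 2 ≤ D := by
    obtain ⟨k0, hk0⟩ := exists_tail hi one_pos
    set k := max k0 1 with hk
    have hk1 : 1 ≤ k := le_max_right _ _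
    have ht := hk0 k (le_max_left _ _)
    refine ⟨16 + V₀ * (4 * k) ^ 2, fun y => ?_⟩
    by_cases hy : ‖y‖ ≤ 4 * k
    · have : f y * ‖y‖ ^ 2 ≤ V₀ * (4 * k) ^ 2 := by
        have := hfV y; gcongr
      linarith
    · push Not at hy
      have := u0_decay hV hu hpde (x := y) (ρ := ‖y‖ / 2) (η := 1) (by linarith) le_rfl ?_
      · rw [le_div_iff₀ (by have : 0 < ‖y‖ := by linarith
                            positivity)] at this
        have h2 : 0 ≤ V₀ * (4 * k) ^ 2 := by positivity
        simp only [hf]; linarith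
      · have hbt := ball_tail hi k
        have : ∫ y in ball y (‖y‖ / 2), f y ≤ ∫ y in (closedBall (0:E2) k)ᶜ, f y := by
          refine setIntegral_mono_set hi.integrableOn (Eventually.of_forall fun y => (hf0 y).le) ?_
          refine HasSubset.Subset.eventuallyLE ?_
          intro w hw
          rw [mem_ball, dist_comm, dist_eq_norm] at hw
          have := norm_sub_norm_le y w
          simp only [Set.mem_compl_iff, mem_closedBall_zero_iff]; linarith
        linarith
  have hsym := poho_sym hi hf2.continuous (fun y => (hf0 y).le) hD
  rw [← hM] at hsym
  -- radial derivative
  set g : E2 → ℝ := fun x => x 0 * pd 0 u₀ x + x 1 * pd 1 u₀ x with hg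
  have hgf : ∀ x : E2, g x = -(1 / (2 * Real.pi)) * (x 0 * (∫ y, KK 0 (x - y) * f y) + x 1 * ∫ y, KK 1 (x - y) * f y) := by
    intro x; simp only [hg, hrep]; ring
  have hL : ∫ x, g x * f x = -(M ^ 2 / (4 * Real.pi)) := by
    have : (fun x => g x * f x) = fun x : E2 => -(1 / (2 * Real.pi)) * ((x 0 * (∫ y, KK 0 (x - y) * f y) + x 1 * ∫ y, KK 1 (x - y) * f y) * f x) := by
      ext x; rw [hgf]; ring
    rw [this, integral_const_mul, hsym]; field_simp; try ring
  have hgc : Continuous g := by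
    have c0 := pd_continuous (hu.of_le (by norm_num)) 0
    have c1 := pd_continuous (hu.of_le (by norm_num)) 1
    fun_prop
  have hgb : ∀ x, |g x| ≤ 2 * (2 * M + 4 * Real.pi * D) := by
    intro x
    rw [hgf, abs_mul, abs_neg, abs_of_pos (by positivity)]
    have hA := lemAbs hi (fun y => (hf0 y).le) hD x
    have hj : ∀ j, |x j * ∫ y, KK j (x - y) * f y| ≤ 2 * M + 4 * Real.pi * D := by
      intro j
      refine le_trans ?_ hA.2
      rw [← integral_const_mul, ← Real.norm_eq_abs]
      refine norm_integral_le_of_norm_le hA.1 ?_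
      filter_upwards with y
      have q := hf0 y
      rw [Real.norm_eq_abs, abs_mul, abs_mul, abs_of_pos q]
      have := abs_coord_le x j
      have := abs_KK_le j (x - y)
      gcongr
    have h6 : 1 / (2 * Real.pi) ≤ 1 := by
      rw [div_le_one (by positivity)]; nlinarith [Real.pi_gt_three]
    calc _ ≤ 1 * (|x 0 * ∫ y, KK 0 (x - y) * f y| + |x 1 * ∫ y, KK 1 (x - y) * f y|) := by
          gcongr; exact abs_add_le _ _
      _ ≤ _ := by linarith [hj 0, hj 1]
  -- cut-off integration by parts
  have hc2 : ContDiff ℝ 2 chi := chi.contDiff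
  set φ : ℕ → E2 → ℝ := fun n x => chi (((n:ℝ) + 1)⁻¹ • x) with hφ
  have hφc : ∀ n, ContDiff ℝ 2 (φ n) := fun n => hc2.comp (by fun_prop)
  have hnp : ∀ n : ℕ, 0 < ((n:ℝ) + 1)⁻¹ := fun n => by positivity
  have hφs : ∀ n, HasCompactSupport (φ n) := fun n =>
    chi.hasCompactSupport.comp_homeomorph (Homeomorph.smulOfNeZero _ (hnp n).ne')
  set ψ : ℕ → E2 → ℝ := fun n x => 2 * φ n x + (x 0 * pd 0 (φ n) x + x 1 * pd 1 (φ n) x) with hψ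
  have hIBP : ∀ n, ∫ x, φ n x * (g x * f x) = - ∫ x, ψ n x * f x := by
    intro n
    have hpf : ∀ j x, pd j f x = f x * pd j u₀ x := by
      intro j x
      have hd := (hu.differentiable (by norm_num) x)
      have := (hd.hasFDerivAt.exp.const_mul V₀).fderiv
      simp only [pd, hf]
      rw [this]; simp; ring
    have one : ∀ j : Fin 2, Integrable (fun x : E2 => (φ n x * x j) * pd j f x) ∧ Integrable (fun x : E2 => (φ n x + x j * pd j (φ n) x) * f x) ∧
        ∫ x : E2, (φ n x * x j) * pd j f x = - ∫ x : E2, (φ n x + x j * pd j (φ n) x) * f x := by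
      intro j
      have hcc : ContDiff ℝ 2 (fun x : E2 => φ n x * x j) := (hφc n).mul (by fun_prop)
      have hcs : HasCompactSupport (fun x : E2 => φ n x * x j) := (hφs n).mul_right
      have e : ∀ x, pd j (fun x : E2 => φ n x * x j) x = φ n x + x j * pd j (φ n) x := by
        intro x
        rw [pd_mul ((hφc n).differentiable (by norm_num) x) (by fun_prop), pd_coord]; simp
      have hcs' : HasCompactSupport (pd j (fun x : E2 => φ n x * x j)) := hcs.fderiv_apply (𝕜 := ℝ) _
      have i1 : Integrable (fun x => pd j (fun x : E2 => φ n x * x j) x * f x) :=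
        ((pd_contDiff hcc j).continuous.mul hf2.continuous).integrable_of_hasCompactSupport hcs'.mul_right
      have i2 : Integrable (fun x : E2 => (φ n x * x j) * pd j f x) :=
        (hcc.continuous.mul (pd_contDiff hf2 j).continuous).integrable_of_hasCompactSupport hcs.mul_right
      have i3 : Integrable (fun x : E2 => (φ n x * x j) * f x) :=
        (hcc.continuous.mul hf2.continuous).integrable_of_hasCompactSupport hcs.mul_right
      have := integral_mul_fderiv_eq_neg_fderiv_mul_of_integrable i1 i2 i3
        (fun x _ => hcc.differentiable (by norm_num) x) (fun x _ => hf2.differentiable (by norm_num) x)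
      simp only [e] at i1
      refine ⟨i2, i1, ?_⟩
      have e' : (fun x => (φ n x + x j * pd j (φ n) x) * f x) = fun x => pd j (fun x : E2 => φ n x * x j) x * f x := by
        ext x; rw [e]
      rw [e']; exact this
    obtain ⟨a1, a2, a3⟩ := one 0
    obtain ⟨b1, b2, b3⟩ := one 1
    have e1 : (fun x => φ n x * (g x * f x)) = fun x : E2 => (φ n x * x 0) * pd 0 f x + (φ n x * x 1) * pd 1 f x := by
      ext x; simp only [hpf, hg]; ring
    have e2 : (fun x => ψ n x * f x) = fun x : E2 => (φ n x + x 0 * pd 0 (φ n) x) * f x + (φ n x + x 1 * pd 1 (φ n) x) * f x := by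
      ext x; simp only [hψ]; ring
    rw [e1, e2, integral_add a1 b1, integral_add a2 b2, a3, b3]; ring
  have hφ1 : ∀ x : E2, ∀ᶠ n in atTop, φ n =ᶠ[nhds x] fun _ => 1 := by
    intro x
    have ht : Tendsto (fun n : ℕ => ‖((n:ℝ) + 1)⁻¹ • x‖) atTop (nhds 0) := by
      have h1 : Tendsto (fun n : ℕ => ((n:ℝ) + 1)⁻¹) atTop (nhds 0) := by
        simpa using tendsto_one_div_add_atTop_nhds_zero_nat (𝕜 := ℝ)
      have := (h1.smul_const x).norm
      simpa using this
    filter_upwards [ht.eventually (gt_mem_nhds (show (0:ℝ) < 5/16 by norm_num))] with n hn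
    have hc : ContinuousAt (fun x : E2 => ((n:ℝ) + 1)⁻¹ • x) x := by fun_prop
    exact hc.eventually (chi_ev_one hn)
  have t1 : Tendsto (fun n => ∫ x, φ n x * (g x * f x)) atTop (nhds (∫ x, g x * f x)) := by
    refine tendsto_integral_of_dominated_convergence (fun x => 2 * (2 * M + 4 * Real.pi * D) * f x) ?_ (hi.const_mul _) ?_ ?_
    · intro n
      exact ((hφc n).continuous.mul (hgc.mul hf2.continuous)).aestronglyMeasurable
    · intro n; filter_upwards with x
      have q := hf0 x
      rw [Real.norm_eq_abs, abs_mul, abs_mul, abs_of_pos q, ← mul_assoc]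
      have h1 : |φ n x| ≤ 1 := by rw [abs_of_nonneg chi.nonneg]; exact chi.le_one
      have h2 := hgb x
      calc _ ≤ 1 * (2 * (2 * M + 4 * Real.pi * D)) * f x := by gcongr
        _ = _ := by ring
    · filter_upwards with x
      refine tendsto_const_nhds.congr' ?_
      filter_upwards [hφ1 x] with n hn
      rw [hn.eq_of_nhds, one_mul]
  obtain ⟨P, hP⟩ : ∃ P, ∀ x : E2, |x 0 * pd 0 chi x + x 1 * pd 1 chi x| ≤ P := by
    have c0 := (pd_contDiff hc2 0).continuous
    have c1 := (pd_contDiff hc2 1).continuous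
    obtain ⟨P, hP⟩ := (isCompact_closedBall (0:E2) 1).exists_bound_of_continuousOn
      (f := fun x : E2 => x 0 * pd 0 chi x + x 1 * pd 1 chi x) (by fun_prop)
    refine ⟨max P 0, fun x => ?_⟩
    by_cases hx : ‖x‖ ≤ 1
    · exact (hP x (by simpa using hx)).trans (le_max_left _ _)
    · have h := fun k => (pd_chi_zero (y := x) (Or.inr (by push Not at hx; linarith)) k).eq_of_nhds
      simp [h]
  have hψb : ∀ n x, |ψ n x| ≤ 2 + P := by
    intro n x
    have e : ∀ j, pd j (φ n) x = ((n:ℝ) + 1)⁻¹ * pd j chi (((n:ℝ) + 1)⁻¹ • x) := by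
      intro j
      have := pd_comp_affine chi 0 (((n:ℝ) + 1)⁻¹) 0 (hnp n).ne' j x
      simpa using this
    have e2 : ψ n x = 2 * φ n x + ((((n:ℝ) + 1)⁻¹ • x) 0 * pd 0 chi (((n:ℝ) + 1)⁻¹ • x) + (((n:ℝ) + 1)⁻¹ • x) 1 * pd 1 chi (((n:ℝ) + 1)⁻¹ • x)) := by
      simp only [hψ, e, PiLp.smul_apply, smul_eq_mul]; ring
    rw [e2]
    refine (abs_add_le _ _).trans (add_le_add ?_ (hP _))
    rw [abs_of_nonneg (mul_nonneg (by norm_num) chi.nonneg)]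
    have : φ n x ≤ 1 := chi.le_one
    linarith
  have t2 : Tendsto (fun n => ∫ x, ψ n x * f x) atTop (nhds (∫ x, 2 * f x)) := by
    refine tendsto_integral_of_dominated_convergence (fun x => (2 + P) * f x) ?_ (hi.const_mul _) ?_ ?_
    · intro n
      have c0 := (pd_contDiff (hφc n) 0).continuous
      have c1 := (pd_contDiff (hφc n) 1).continuous
      have c2 := (hφc n).continuous
      have c3 := hf2.continuous
      have : Continuous fun x => ψ n x * f x := by simp only [hψ]; fun_prop
      exact this.aestronglyMeasurable
    · intro n; filter_upwards with x
      have q := hf0 x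
      rw [Real.norm_eq_abs, abs_mul, abs_of_pos q]
      have := hψb n x
      gcongr
    · filter_upwards with x
      refine tendsto_const_nhds.congr' ?_
      filter_upwards [hφ1 x] with n hn
      have h1 := fun j => (pd_congr hn j).eq_of_nhds
      simp only [pd_const'] at h1
      simp only [hψ, h1, hn.eq_of_nhds]; ring
  have t3 : Tendsto (fun n => ∫ x, φ n x * (g x * f x)) atTop (nhds (-∫ x, 2 * f x)) := by
    simp only [hIBP]; exact t2.neg
  have hfin := tendsto_nhds_unique t1 t3
  rw [hL, integral_const_mul, ← hM] at hfin
  have h3 : M ^ 2 = 8 * Real.pi * M := by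
    have : M ^ 2 / (4 * Real.pi) = 2 * M := by linarith
    rw [div_eq_iff (by positivity)] at this
    linarith
  have : M * (M - 8 * Real.pi) = 0 := by linear_combination h3
  rcases mul_eq_zero.1 this with h | h
  · exact absurd h hMpos.ne'
  · linarith


theorem core_est {f : E2 → ℝ} (hf : Integrable f) (h0 : ∀ y, 0 ≤ f y) {x : E2} {k η D : ℝ} (hk : 0 < k) (hη : 0 < η)
    (hη1 : η ≤ 1 / 3) (hx : 4 * k ≤ ‖x‖) (hkx : k ≤ η * ‖x‖) (hD0 : 0 ≤ D)
    (hin : 8 * Real.pi - 2 * η ≤ ∫ y in closedBall (0:E2) k, f y) (htot : ∫ y, f y ≤ 8 * Real.pi + η)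
    (hD : ∀ y ∈ ball x (‖x‖ / 2), f y ≤ D / ‖x‖ ^ 2) (j : Fin 2) :
    |(∫ y, KK j (x - y) * f y) - 8 * Real.pi * KK j x| ≤ (131 * η + 4 * D) / ‖x‖ := by
  have hxp : 0 < ‖x‖ := by linarith
  have hpi := Real.pi_lt_d2
  have hpi0 := Real.pi_pos
  have hbt := ball_tail hf k
  have htail : ∫ y in {y : E2 | 2 * k ≤ ‖y‖}, f y ≤ 3 * η := by
    have : ∫ y in {y : E2 | 2 * k ≤ ‖y‖}, f y ≤ ∫ y in (closedBall (0:E2) k)ᶜ, f y := by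
      refine setIntegral_mono_set hf.integrableOn (Eventually.of_forall h0) ?_
      refine LE.le.eventuallyLE ?_
      intro y hy
      simp only [Set.mem_ofPred_eq] at hy
      simp only [Set.mem_compl_iff, mem_closedBall, dist_zero_right, not_le]
      linarith
    linarith
  have h1 := lemB hf h0 (x := x) (k := 2 * k) (η := 3 * η) (D := D) (M := 30) (by linarith) (by linarith) htail (by linarith) hD j
  have hle : ∫ y in closedBall (0:E2) k, f y ≤ ∫ y, f y := setIntegral_le_integral hf (Eventually.of_forall h0)
  have h2 : |(∫ y, f y) - 8 * Real.pi| ≤ 2 * η := by rw [abs_le]; constructor <;> linarith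
  have h3 : |((∫ y, f y) - 8 * Real.pi) * KK j x| ≤ 2 * η / ‖x‖ := by
    rw [abs_mul, div_eq_mul_inv]
    exact mul_le_mul h2 (abs_KK_le j x) (abs_nonneg _) (by linarith)
  have h4 : 2 * (2 * k) * 30 / ‖x‖ ≤ 120 * η := by
    rw [div_le_iff₀ hxp]; linarith
  have h5 : (2 * (2 * k) * 30 / ‖x‖ + 3 * (3 * η) + Real.pi * D) / ‖x‖ ≤ (129 * η + 4 * D) / ‖x‖ := by
    have : Real.pi * D ≤ 4 * D := by nlinarith
    exact div_le_div_of_nonneg_right (by linarith) hxp.le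
  have h6 : (∫ y, KK j (x - y) * f y) - 8 * Real.pi * KK j x =
      ((∫ y, KK j (x - y) * f y) - (∫ y, f y) * KK j x) + ((∫ y, f y) - 8 * Real.pi) * KK j x := by ring
  rw [h6]
  refine (abs_add_le _ _).trans ((add_le_add (h1.trans h5) h3).trans (le_of_eq ?_))
  ring

/-- the cut-off density -/
noncomputable def FF (Z : E2 → ℝ) (R : ℝ) (ξ : E2) : ℝ := chi (R⁻¹ • ξ) * - lapl Z ξ

theorem norm_inv_smul {R : ℝ} (hR : 0 < R) (ξ : E2) : ‖R⁻¹ • ξ‖ = ‖ξ‖ / R := by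
  rw [norm_smul, Real.norm_of_nonneg (by positivity)]; field_simp

theorem FF_cont {Z : E2 → ℝ} (hZ : ContDiff ℝ 2 Z) (R : ℝ) : Continuous (FF Z R) := by
  unfold FF
  have h1 := chi_contDiff.continuous
  have h2 := lapl_continuous hZ
  fun_prop

theorem FF_supp {Z : E2 → ℝ} {R : ℝ} (hR : 0 < R) {ξ : E2} (h : 7 / 16 * R ≤ ‖ξ‖) : FF Z R ξ = 0 := by
  unfold FF
  rw [chi_zero, zero_mul]
  rw [norm_inv_smul hR, le_div_iff₀ hR]; exact h

theorem FF_one {Z : E2 → ℝ} {R : ℝ} (hR : 0 < R) {ξ : E2} (h : ‖ξ‖ ≤ 5 / 16 * R) : FF Z R ξ = - lapl Z ξ := by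
  unfold FF
  rw [chi_one, one_mul]
  rw [norm_inv_smul hR, div_le_iff₀ hR]; exact h

theorem FF_int {Z : E2 → ℝ} (hZ : ContDiff ℝ 2 Z) {R : ℝ} (hR : 0 < R) : Integrable (FF Z R) := by
  refine (FF_cont hZ R).integrable_of_hasCompactSupport ?_
  refine HasCompactSupport.intro (isCompact_closedBall (0:E2) (7/16*R)) ?_
  intro ξ hξ
  simp only [mem_closedBall, dist_zero_right, not_le] at hξ
  exact FF_supp hR hξ.le

theorem FF_nonneg {Z : E2 → ℝ} {R : ℝ} (hR : 0 < R) (h : ∀ y ∈ ball (0:E2) (15/32*R), 0 ≤ - lapl Z y) (y : E2) : 0 ≤ FF Z R y := by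
  by_cases hy : ‖y‖ < 15/32*R
  · exact mul_nonneg chi.nonneg (h y (by simpa using hy))
  · rw [FF_supp hR (by linarith)]

theorem FF_le {Z : E2 → ℝ} {R : ℝ} (h : ∀ y ∈ ball (0:E2) (15/32*R), 0 ≤ - lapl Z y) {y : E2} (hy : y ∈ ball (0:E2) (15/32*R)) :
    FF Z R y ≤ - lapl Z y := by
  unfold FF
  exact mul_le_of_le_one_left (h y hy) chi.le_one

theorem FF_mass {Z : E2 → ℝ} (hZ : ContDiff ℝ 2 Z) {R : ℝ} (hR : 0 < R) (h : ∀ y ∈ ball (0:E2) (15/32*R), 0 ≤ - lapl Z y) :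
    ∫ y, FF Z R y ≤ ∫ y in ball (0:E2) (15/32*R), - lapl Z y := by
  have : ∫ y, FF Z R y = ∫ y in ball (0:E2) (15/32*R), FF Z R y := by
    refine (setIntegral_eq_integral_of_forall_compl_eq_zero fun y hy => ?_).symm
    simp only [mem_ball, dist_zero_right, not_lt] at hy
    exact FF_supp hR (by linarith)
  rw [this]
  refine setIntegral_mono_on (FF_int hZ hR).integrableOn ?_ measurableSet_ball fun y hy => FF_le h hy
  exact ((lapl_continuous hZ).neg.continuousOn.integrableOn_compact (isCompact_closedBall (0:E2) (15/32*R))).mono_set ball_subset_closedBall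

/-- tail estimate for a ball away from the origin -/
theorem ball_mass {g : E2 → ℝ} (hg : Continuous g) {S k m t : ℝ} (h0 : ∀ y ∈ ball (0:E2) S, 0 ≤ g y) (hkS : k < S)
    (hin : m - t ≤ ∫ y in closedBall (0:E2) k, g y) (htot : ∫ y in ball (0:E2) S, g y ≤ m) {y : E2} {ρ : ℝ}
    (h1 : ‖y‖ + ρ ≤ S) (h2 : k + ρ ≤ ‖y‖) : ∫ w in ball y ρ, g w ≤ t := by
  have hi : IntegrableOn g (ball (0:E2) S) :=
    (hg.continuousOn.integrableOn_compact (isCompact_closedBall (0:E2) S)).mono_set ball_subset_closedBall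
  have hsub : closedBall (0:E2) k ∪ ball y ρ ⊆ ball (0:E2) S := by
    rintro w (hw | hw)
    · simp only [mem_closedBall, mem_ball, dist_zero_right] at hw ⊢; linarith
    · simp only [mem_ball, dist_eq_norm, sub_zero] at hw ⊢
      have : ‖w‖ ≤ ‖w - y‖ + ‖y‖ := by simpa using norm_add_le (w - y) y
      linarith
  have hdis : Disjoint (closedBall (0:E2) k) (ball y ρ) := by
    rw [Set.disjoint_left]
    intro w hw hw2
    simp only [mem_closedBall, mem_ball, dist_eq_norm, sub_zero] at hw hw2
    have : ‖y‖ ≤ ‖w - y‖ + ‖w‖ := by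
      have := norm_sub_le w (w - y); simp at this; linarith
    linarith
  have hu := setIntegral_union hdis measurableSet_ball (hi.mono_set (Set.subset_union_left.trans hsub)) (hi.mono_set (Set.subset_union_right.trans hsub))
  have hm : ∫ w in closedBall (0:E2) k ∪ ball y ρ, g w ≤ ∫ w in ball (0:E2) S, g w := by
    refine setIntegral_mono_set hi ?_ (LE.le.eventuallyLE hsub)
    exact (ae_restrict_iff' measurableSet_ball).2 (Eventually.of_forall h0)
  linarith

theorem half_le {x y : E2} (hy : y ∈ ball x (‖x‖ / 2)) : ‖x‖ / 2 ≤ ‖y‖ ∧ ‖y‖ ≤ 3 / 2 * ‖x‖ := by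
  simp only [mem_ball, dist_eq_norm] at hy
  have h1 : ‖x‖ ≤ ‖y - x‖ + ‖y‖ := by
    have := norm_sub_le y (y - x); simp at this; linarith
  have h2 : ‖y‖ ≤ ‖y - x‖ + ‖x‖ := by simpa using norm_add_le (y - x) x
  constructor <;> linarith

theorem Z_est {Z : E2 → ℝ} (hZ : ContDiff ℝ 2 Z) {R a Λ k η : ℝ} (hR : 0 < R) (ha : 0 < a) (hΛ : 0 < Λ)
    (H1 : ∀ y ∈ ball (0:E2) (15/32*R), a * Real.exp (Z y) ≤ - lapl Z y ∧ - lapl Z y ≤ Λ * a * Real.exp (Z y))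
    (hk : 0 < k) (hη : 0 < η) (hη1 : η ≤ 1/3) (hη2 : 3 * η ≤ 1 / Λ) (hkR : k ≤ 5/16*R)
    (htot : ∫ y in ball (0:E2) (15/32*R), - lapl Z y ≤ 8 * Real.pi + η)
    (hin : 8 * Real.pi - 2 * η ≤ ∫ y in closedBall (0:E2) k, FF Z R y) {x : E2} (hx : 4 * k ≤ ‖x‖) (hkx : k ≤ η * ‖x‖)
    (hxR : ‖x‖ ≤ R / 4) (j : Fin 2) :
    |(∫ y, KK j (x - y) * FF Z R y) - 8 * Real.pi * KK j x| ≤ (131 + 3072 * Λ) * η / ‖x‖ := by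
  have h0 : ∀ y ∈ ball (0:E2) (15/32*R), 0 ≤ - lapl Z y := fun y hy => le_trans (by positivity) (H1 y hy).1
  have hxp : 0 < ‖x‖ := by linarith
  have hin' : ∫ y in closedBall (0:E2) k, FF Z R y = ∫ y in closedBall (0:E2) k, - lapl Z y := by
    refine setIntegral_congr_fun measurableSet_closedBall fun y hy => FF_one hR ?_
    simp only [mem_closedBall, dist_zero_right] at hy; linarith
  have := core_est (FF_int hZ hR) (FF_nonneg hR h0) (x := x) (k := k) (η := η) (D := 768 * Λ * η) hk hη hη1 hx hkx (by positivity) hin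
    ((FF_mass hZ hR h0).trans htot) (fun y hy => ?_) j
  · refine this.trans (le_of_eq ?_); ring
  obtain ⟨hy1, hy2⟩ := half_le hy
  have hyp : 0 < ‖y‖ := by linarith
  have hyb : y ∈ ball (0:E2) (15/32*R) := by simp only [mem_ball, dist_zero_right]; linarith
  have hm := ball_mass (g := fun y => - lapl Z y) (lapl_continuous hZ).neg h0 (k := k) (m := 8 * Real.pi + η) (t := 3 * η) (by linarith) (by linarith) htot (y := y) (ρ := ‖y‖ / 4) (by linarith) (by linarith)
  have he := eps_reg hΛ hZ y (ρ := ‖y‖ / 4) (η := 3 * η) (by positivity) ha (fun w hw => H1 w ?_) hη2 hm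
  · refine (FF_le h0 hyb).trans (he.trans ?_)
    rw [div_le_div_iff₀ (by positivity) (by positivity)]
    have : ‖x‖ ^ 2 ≤ 4 * ‖y‖ ^ 2 := by nlinarith
    have h2 : 0 ≤ Λ * η := by positivity
    nlinarith
  · simp only [mem_ball, dist_eq_norm, sub_zero] at hw ⊢
    have : ‖w‖ ≤ ‖w - y‖ + ‖y‖ := by simpa using norm_add_le (w - y) y
    linarith

theorem u0_est {u₀ : E2 → ℝ} {V₀ : ℝ} (hV : 0 < V₀) (hu : ContDiff ℝ 2 u₀) (hpde : ∀ x, -(lapl u₀ x) = V₀ * Real.exp (u₀ x))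
    (hi : Integrable (fun y => V₀ * Real.exp (u₀ y))) (hM : ∫ y, V₀ * Real.exp (u₀ y) = 8 * Real.pi) {k η : ℝ}
    (hk : 0 < k) (hη : 0 < η) (hη1 : η ≤ 1/3) 
    (hin : 8 * Real.pi - η ≤ ∫ y in closedBall (0:E2) k, V₀ * Real.exp (u₀ y)) {x : E2} (hx : 4 * k ≤ ‖x‖) (hkx : k ≤ η * ‖x‖)
    (j : Fin 2) :
    |(∫ y, KK j (x - y) * (V₀ * Real.exp (u₀ y))) - 8 * Real.pi * KK j x| ≤ (131 + 3072) * η / ‖x‖ := by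
  have hxp : 0 < ‖x‖ := by linarith
  have h0 : ∀ y, 0 ≤ V₀ * Real.exp (u₀ y) := fun y => by positivity
  have := core_est hi h0 (x := x) (k := k) (η := η) (D := 768 * η) hk hη hη1 hx hkx (by positivity) (by linarith)
    (by linarith) (fun y hy => ?_) j
  · refine this.trans (le_of_eq ?_); ring
  obtain ⟨hy1, hy2⟩ := half_le hy
  have hyp : 0 < ‖y‖ := by linarith
  have hcont : Continuous (fun y => V₀ * Real.exp (u₀ y)) := by have := hu.continuous; fun_prop
  have hm := ball_mass hcont (S := 2 * ‖y‖) (fun y _ => h0 y) (k := k) (m := 8 * Real.pi) (t := 3 * η) (by linarith) (by linarith)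
    ((setIntegral_le_integral hi (Eventually.of_forall h0)).trans hM.le) (y := y) (ρ := ‖y‖ / 4) (by linarith) (by linarith)
  have he := u0_decay hV hu hpde (ρ := ‖y‖ / 4) (by positivity) (by linarith) hm
  refine he.trans ?_
  rw [div_le_div_iff₀ (by positivity) (by positivity)]
  have : ‖x‖ ^ 2 ≤ 4 * ‖y‖ ^ 2 := by nlinarith
  nlinarith

theorem abstract_thm {Z : ℕ → E2 → ℝ} {R a : ℕ → ℝ} {Λ B C' V₀ : ℝ} {u₀ : E2 → ℝ}
    (hZ : ∀ i, ContDiff ℝ 2 (Z i)) (hR : ∀ i, 0 < R i) (hRt : Tendsto R atTop atTop) (ha : ∀ i, 0 < a i) (hΛ : 0 < Λ)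
    (H1 : ∀ i, ∀ y ∈ ball (0:E2) (15/32*R i), a i * Real.exp (Z i y) ≤ - lapl (Z i) y ∧ - lapl (Z i) y ≤ Λ * a i * Real.exp (Z i y))
    (H2 : ∀ η > 0, ∀ᶠ i in atTop, ∫ y in ball (0:E2) (15/32*R i), - lapl (Z i) y ≤ 8 * Real.pi + η)
    (H2' : ∀ i, ∫ y in ball (0:E2) (15/32*R i), - lapl (Z i) y ≤ B)
    (H3 : ∀ i, ∫ ξ in {ξ : E2 | ‖ξ‖ ∈ Set.Icc (5/16:ℝ) (7/16)}, |Z i (R i • ξ)| ≤ C')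
    (hV : 0 < V₀) (hu : ContDiff ℝ 2 u₀) (hpde : ∀ x, -(lapl u₀ x) = V₀ * Real.exp (u₀ x)) (hle : ∀ x, u₀ x ≤ 0)
    (hc : ∀ k : ℝ, TendstoUniformlyOn (fun i y => - lapl (Z i) y) (fun y => V₀ * Real.exp (u₀ y)) atTop (closedBall 0 k))
    (hpd : ∀ j x, Tendsto (fun i => pd j (Z i) x) atTop (nhds (pd j u₀ x))) :
    ∀ ε > 0, ∃ k > (0:ℝ), ∃ N : ℕ, ∃ C > (0:ℝ), ∀ i ≥ N, ∀ j x, k ≤ ‖x‖ → ‖x‖ ≤ R i / 4 →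
      |pd j (Z i) x - pd j u₀ x| ≤ ε / ‖x‖ + C / R i := by
  obtain ⟨C4, hC4, H4⟩ := L4s
  have hC' : 0 ≤ C' := le_trans (integral_nonneg fun _ => abs_nonneg _) (H3 0)
  have h0 : ∀ i, ∀ y ∈ ball (0:E2) (15/32*R i), 0 ≤ - lapl (Z i) y := fun i y hy =>
    le_trans (mul_nonneg (ha i).le (Real.exp_pos _).le) (H1 i y hy).1
  have H4' : ∀ i x, ‖x‖ ≤ R i / 4 → ∀ j, |pd j (Z i) x + (1/(2*Real.pi)) * ∫ ξ, KK j (x - ξ) * FF (Z i) (R i) ξ| ≤ C4 * C' / R i := by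
    intro i x hx j
    refine (H4 (Z i) (hZ i) (R i) (hR i) x hx j).trans ?_
    rw [div_mul_eq_mul_div]
    have := H3 i
    have := hR i
    gcongr
  set f : E2 → ℝ := fun y => V₀ * Real.exp (u₀ y) with hfdef
  have hfc : Continuous f := by have := hu.continuous; fun_prop
  have hf0 : ∀ y, 0 ≤ f y := fun y => by simp only [hfdef]; positivity
  have hFc : ∀ k : ℝ, TendstoUniformlyOn (fun i => FF (Z i) (R i)) f atTop (closedBall 0 k) := by
    intro k
    refine (hc k).congr ?_
    filter_upwards [hRt.eventually_ge_atTop (16/5*k)] with i hi y hy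
    simp only [mem_closedBall, dist_zero_right] at hy
    exact (FF_one (hR i) (by linarith)).symm
  have hFi := fun i => FF_int (hZ i) (hR i)
  have hF0 := fun i => FF_nonneg (hR i) (h0 i)
  have hFB : ∀ i, ∫ y, FF (Z i) (R i) y ≤ B := fun i => (FF_mass (hZ i) (hR i) (h0 i)).trans (H2' i)
  obtain ⟨hfi, hlim⟩ := lim_integrable hFi hF0 hFB hfc hf0 hFc
  have hfB : ∫ y, f y ≤ B := by
    by_contra hcon
    push Not at hcon
    obtain ⟨k0, hk0⟩ := exists_tail hfi (e := (∫ y, f y) - B) (by linarith)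
    have h1 := hk0 k0 le_rfl
    have h2 : ∫ y in closedBall (0:E2) k0, f y ≤ B := le_of_tendsto (hlim k0) (Eventually.of_forall fun i =>
      (setIntegral_le_integral (hFi i) (Eventually.of_forall (hF0 i))).trans (hFB i))
    linarith
  have hRinv : Tendsto (fun i => C4 * C' / R i) atTop (nhds 0) := hRt.const_div_atTop _
  have hrep : ∀ j x, pd j u₀ x = -(1 / (2 * Real.pi)) * ∫ y, KK j (x - y) * f y := by
    intro j x
    have ht := conv_pot hFi hF0 hFB hfc hf0 hfi hfB (fun i => FF_cont (hZ i) (R i)) hFc x j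
    have h1 := (hpd j x).add (ht.const_mul (1/(2*Real.pi)))
    have h2 : Tendsto (fun i => pd j (Z i) x + (1/(2*Real.pi)) * ∫ ξ, KK j (x - ξ) * FF (Z i) (R i) ξ) atTop (nhds 0) := by
      refine squeeze_zero_norm' ?_ hRinv
      filter_upwards [hRt.eventually_ge_atTop (4*‖x‖)] with i hi
      exact H4' i x (by linarith) j
    have := tendsto_nhds_unique h1 h2
    linarith
  have hmass : ∫ y, f y = 8 * Real.pi := mass_eq hV hu hpde hle hfi hrep
  intro ε hε
  obtain ⟨η, hη, hη1, hη2, hη3⟩ : ∃ η > 0, η ≤ 1/3 ∧ 3 * η ≤ 1/Λ ∧ (3334 + 3072 * Λ) * η ≤ ε := by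
    refine ⟨min (1/3) (min (1/(3*Λ)) (ε / (3334 + 3072 * Λ))), ?_, min_le_left _ _, ?_, ?_⟩
    · have : 0 < 3334 + 3072 * Λ := by positivity
      positivity
    · have : min (1/3) (min (1/(3*Λ)) (ε / (3334 + 3072 * Λ))) ≤ 1/(3*Λ) := (min_le_right _ _).trans (min_le_left _ _)
      calc _ ≤ 3 * (1/(3*Λ)) := by linarith
        _ = 1/Λ := by field_simp
    · have : min (1/3) (min (1/(3*Λ)) (ε / (3334 + 3072 * Λ))) ≤ (ε / (3334 + 3072 * Λ)) := (min_le_right _ _).trans (min_le_right _ _)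
      have hp : 0 < 3334 + 3072 * Λ := by positivity
      rw [le_div_iff₀ hp] at this; linarith
  obtain ⟨k0, hk0⟩ := exists_tail hfi hη
  set k := max k0 1 with hkdef
  have hk1 : 1 ≤ k := le_max_right _ _
  have hkp : 0 < k := by linarith
  have hkin := hk0 k (le_max_left _ _)
  rw [hmass] at hkin
  have e1 := (hlim k).eventually (lt_mem_nhds (show 8 * Real.pi - 2 * η < ∫ y in closedBall (0:E2) k, f y by linarith))
  obtain ⟨N, hN⟩ := eventually_atTop.1 (e1.and ((H2 η hη).and (hRt.eventually_ge_atTop (16/5*k))))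
  refine ⟨4 * k + k / η, by positivity, N, C4 * C' + 1, by positivity, ?_⟩
  intro i hi j x hx hxR
  obtain ⟨hi1, hi2, hi3⟩ := hN i hi
  have hkη : 0 < k / η := by positivity
  have hx4 : 4 * k ≤ ‖x‖ := by linarith
  have hkx : k ≤ η * ‖x‖ := by
    have : k / η ≤ ‖x‖ := by linarith
    rw [div_le_iff₀ hη] at this; linarith
  have hxp : 0 < ‖x‖ := by linarith
  have A1 := Z_est (hZ i) (hR i) (ha i) hΛ (H1 i) hkp hη hη1 hη2 (by linarith) hi2 hi1.le hx4 hkx hxR j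
  have A2 := u0_est hV hu hpde hfi hmass hkp hη hη1 hkin.le hx4 hkx j
  have A3 := H4' i x hxR j
  rw [hrep j x]
  set I := ∫ y, KK j (x - y) * FF (Z i) (R i) y
  set J := ∫ y, KK j (x - y) * f y
  set m := 8 * Real.pi * KK j x
  set c := 1 / (2 * Real.pi)
  have hc0 : 0 ≤ c := by positivity
  have hc1 : c ≤ 1 := by
    have := Real.pi_gt_three
    rw [div_le_one (by positivity)]; linarith
  have e : pd j (Z i) x - -c * J = (pd j (Z i) x + c * I) - c * ((I - m) - (J - m)) := by ring
  rw [e]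
  have hIJ : |(I - m) - (J - m)| ≤ (3334 + 3072 * Λ) * η / ‖x‖ := by
    refine (abs_sub _ _).trans ((add_le_add A1 A2).trans (le_of_eq ?_)); ring
  have hIJ2 : |c * ((I - m) - (J - m))| ≤ ε / ‖x‖ := by
    rw [abs_mul, abs_of_nonneg hc0]
    refine (mul_le_of_le_one_left (abs_nonneg _) hc1).trans (hIJ.trans ?_)
    gcongr
  refine (abs_sub _ _).trans ?_
  have : C4 * C' / R i ≤ (C4 * C' + 1) / R i := by
    have := hR i
    gcongr; linarith
  linarith


theorem infDist_sphere_le {x : E2} (hx : x ∈ ball (0:E2) 1) : infDist x (sphere (0:E2) 1) ≤ 1 - ‖x‖ := by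
  by_cases h : x = 0
  · subst h
    have h1 : (EuclideanSpace.single (0:Fin 2) (1:ℝ) : E2) ∈ sphere (0:E2) 1 := by simp
    have := infDist_le_dist_of_mem (x := (0:E2)) h1
    simpa using this
  · have hn : 0 < ‖x‖ := norm_pos_iff.2 h
    have h1 : ‖x‖⁻¹ • x ∈ sphere (0:E2) 1 := by
      simp [norm_smul, hn.ne']
    have h2 := infDist_le_dist_of_mem (x := x) h1
    have h3 : x - ‖x‖⁻¹ • x = (1 - ‖x‖⁻¹) • x := by rw [sub_smul, one_smul]
    have hx1 : ‖x‖ < 1 := by simpa using hx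
    have h4 : 1 ≤ ‖x‖⁻¹ := (one_le_inv₀ hn).2 hx1.le
    rw [dist_eq_norm, h3, norm_smul, Real.norm_of_nonpos (by linarith)] at h2
    have : -(1 - ‖x‖⁻¹) * ‖x‖ = 1 - ‖x‖ := by field_simp; ring
    linarith

theorem infDist_sphere_pos {x : E2} (hx : x ∈ ball (0:E2) 1) : 0 < infDist x (sphere (0:E2) 1) := by
  refine (IsClosed.notMem_iff_infDist_pos isClosed_sphere ⟨EuclideanSpace.single (0:Fin 2) (1:ℝ), by simp⟩).1 ?_
  have hx1 : ‖x‖ < 1 := by simpa using hx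
  simp only [mem_sphere, dist_zero_right]
  linarith

theorem ball_sub_unit {x : E2} {δ : ℝ} (h : δ ≤ 1 - ‖x‖) : ball x δ ⊆ ball (0:E2) 1 := by
  intro y hy
  simp only [mem_ball, dist_eq_norm, sub_zero] at hy ⊢
  have : ‖y‖ ≤ ‖y - x‖ + ‖x‖ := by simpa using norm_add_le (y - x) x
  linarith

theorem affine_mem {x y : E2} {r ρ : ℝ} (hr : 0 < r) (hy : y ∈ ball (0:E2) (ρ / r)) : x + r • y ∈ ball x ρ := by
  simp only [mem_ball, dist_zero_right] at hy
  rw [lt_div_iff₀ hr] at hy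
  simp only [mem_ball, dist_eq_norm, add_sub_cancel_left, norm_smul, Real.norm_of_nonneg hr.le]
  linarith

theorem extend_C2 {g : E2 → ℝ} {R : ℝ} (hR : 0 < R) (hg : ContDiffOn ℝ 2 g (ball 0 R)) :
    ∃ Z : E2 → ℝ, ContDiff ℝ 2 Z ∧ ∀ y ∈ ball (0:E2) (15/32*R), Z y = g y := by
  let φ : ContDiffBump (0:E2) := ⟨15/32*R, 1/2*R, by positivity, by linarith⟩
  refine ⟨fun y => φ y * g y, ?_, ?_⟩
  · rw [contDiff_iff_contDiffAt]
    intro y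
    by_cases hy : y ∈ ball (0:E2) R
    · exact φ.contDiffAt.mul (hg.contDiffAt (isOpen_ball.mem_nhds hy))
    · have : (fun y => φ y * g y) =ᶠ[nhds y] fun _ => 0 := by
        simp only [mem_ball, dist_zero_right, not_lt] at hy
        filter_upwards [(isOpen_lt continuous_const continuous_norm).mem_nhds (show 1/2*R < ‖y‖ by linarith)] with w hw
        have hw2 : φ.rOut ≤ dist w 0 := by rw [dist_zero_right]; exact le_of_lt hw
        rw [φ.zero_of_le_dist hw2, zero_mul]
      exact contDiffAt_const.congr_of_eventuallyEq this
  · intro y hy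
    show φ y * g y = g y
    rw [φ.one_of_mem_closedBall (ball_subset_closedBall hy), one_mul]

theorem affine_integral (G : E2 → ℝ) (x : E2) {r : ℝ} (hr : 0 < r) (ρ : ℝ) :
    ∫ y in ball (0:E2) (ρ / r), r ^ 2 * G (x + r • y) = ∫ y in ball x ρ, G y := by
  rw [integral_const_mul, Measure.setIntegral_comp_smul_of_pos volume (fun y => G (x + y)) _ hr, _root_.smul_ball hr.ne']
  have h1 : (fun y : E2 => x + y) ⁻¹' ball x ρ = ball (0:E2) ρ := by
    ext y; simp
  have h2 := (measurePreserving_add_left (volume : Measure E2) x).setIntegral_preimage_emb (measurableEmbedding_addLeft x) G (ball x ρ)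
  rw [h1] at h2
  have h3 : ‖r‖ * (ρ / r) = ρ := by rw [Real.norm_of_nonneg hr.le]; field_simp
  simp only [smul_zero, h3, h2]
  simp
  field_simp

theorem single_index {u V : E2 → ℝ} {x : E2} {δ r b V₀ Cε : ℝ} (hu : ContDiffOn ℝ 2 u (closedBall (0:E2) 1))
    (hVb : ∀ y ∈ ball (0:E2) 1, 0 ≤ V y ∧ V y ≤ b) (hV0 : 0 < V₀) 
    (hpde : ∀ y ∈ ball (0:E2) 1, -(lapl u y) = V y * Real.exp (u y))
    (hbc : ∀ y ∈ sphere (0:E2) 1, u y = 0) (hδ0 : 0 < δ) (hδ : δ ≤ 1 - ‖x‖) (hr : 0 < r)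
    (hVl : ∀ y ∈ ball x δ, V₀ / 2 ≤ V y) (hC : ∀ y : E2, ‖y‖ = 5/16 → u (x + δ • y) ≤ Cε)
    (hint : IntegrableOn (fun y => V y * Real.exp (u y)) (ball x (δ / 2))) :
    ∃ Z : E2 → ℝ, ContDiff ℝ 2 Z ∧ (∀ y ∈ ball (0:E2) (15/32*(δ/r)), Z y = u (x + r • y)) ∧
      (∀ y ∈ ball (0:E2) (15/32*(δ/r)), V₀/2*r^2 * Real.exp (Z y) ≤ - lapl Z y ∧ - lapl Z y ≤ (2*b/V₀) * (V₀/2*r^2) * Real.exp (Z y)) ∧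
      (∫ y in ball (0:E2) (15/32*(δ/r)), - lapl Z y ≤ ∫ y in ball x (δ/2), V y * Real.exp (u y)) ∧
      (∫ ξ in {ξ : E2 | ‖ξ‖ ∈ Set.Icc (5/16:ℝ) (7/16)}, |Z ((δ/r) • ξ)| ≤ 2 * Real.pi * max Cε 0 * (7/16)^2) := by
  have hR : 0 < δ / r := by positivity
  have hsub := ball_sub_unit hδ
  have hg : ContDiffOn ℝ 2 (fun y => u (x + r • y)) (ball 0 (δ/r)) := by
    refine hu.comp (t := closedBall (0:E2) 1) (by fun_prop) ?_
    intro y hy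
    exact ball_subset_closedBall (hsub (affine_mem hr hy))
  obtain ⟨Z, hZ, hZe⟩ := extend_C2 hR hg
  have hmem : ∀ y ∈ ball (0:E2) (15/32*(δ/r)), x + r • y ∈ ball x (15/32*δ) := fun y hy => affine_mem hr (by rwa [mul_div_assoc])
  have hmem' : ∀ y ∈ ball (0:E2) (15/32*(δ/r)), x + r • y ∈ ball x δ := fun y hy => ball_subset_ball (by linarith) (hmem y hy)
  have hlap : ∀ y ∈ ball (0:E2) (15/32*(δ/r)), - lapl Z y = r ^ 2 * (V (x + r • y) * Real.exp (u (x + r • y))) := by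
    intro y hy
    have h1 : Z =ᶠ[nhds y] fun y => u (x + r • y) + 0 := by
      filter_upwards [isOpen_ball.mem_nhds hy] with w hw
      rw [hZe w hw, add_zero]
    rw [(lapl_congr h1).eq_of_nhds, lapl_comp_affine u x r 0 hr.ne', ← hpde _ (hsub (hmem' y hy))]
    ring
  refine ⟨Z, hZ, hZe, ?_, ?_, ?_⟩
  · intro y hy
    rw [hlap y hy, hZe y hy]
    have h1 := hVl _ (hmem' y hy)
    have h2 := (hVb _ (hsub (hmem' y hy))).2
    have e : 2 * b / V₀ * (V₀ / 2 * r ^ 2) = r ^ 2 * b := by field_simp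
    rw [e, mul_assoc (r^2) b]
    constructor
    · have : V₀ / 2 * r ^ 2 * Real.exp (u (x + r • y)) = r ^ 2 * (V₀ / 2 * Real.exp (u (x + r • y))) := by ring
      rw [this]; gcongr
    · gcongr
  · rw [setIntegral_congr_fun measurableSet_ball hlap, ← mul_div_assoc, affine_integral (fun y => V y * Real.exp (u y)) x hr]
    refine setIntegral_mono_set hint ?_ (LE.le.eventuallyLE (ball_subset_ball (by linarith)))
    refine (ae_restrict_iff' measurableSet_ball).2 (Eventually.of_forall fun y hy => ?_)
    have := (hVb y (hsub (ball_subset_ball (by linarith) hy))).1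
    show 0 ≤ V y * Real.exp (u y)
    positivity
  · have hnn := min_principle hu (fun y hy => by
      have h1 := hpde y hy
      have h2 := (hVb y hy).1
      have : 0 ≤ V y * Real.exp (u y) := by positivity
      linarith) hbc
    have hz : ContDiff ℝ 2 (fun ξ : E2 => Z ((δ/r) • ξ)) := hZ.comp (by fun_prop)
    have hin : ∀ ξ : E2, ‖ξ‖ ≤ 7/16 → (δ/r) • ξ ∈ ball (0:E2) (15/32*(δ/r)) := by
      intro ξ hξ
      simp only [mem_ball, dist_zero_right, norm_smul, Real.norm_of_nonneg hR.le]
      nlinarith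
    have hval : ∀ ξ : E2, ‖ξ‖ ≤ 7/16 → Z ((δ/r) • ξ) = u (x + δ • ξ) := by
      intro ξ hξ
      rw [hZe _ (hin ξ hξ), smul_smul, mul_div_cancel₀ _ hr.ne']
    have hms : MeasurableSet {ξ : E2 | ‖ξ‖ ∈ Set.Icc (5/16:ℝ) (7/16)} := measurable_norm measurableSet_Icc
    have habs : ∫ ξ in {ξ : E2 | ‖ξ‖ ∈ Set.Icc (5/16:ℝ) (7/16)}, |Z ((δ/r) • ξ)| = ∫ ξ in {ξ : E2 | ‖ξ‖ ∈ Set.Icc (5/16:ℝ) (7/16)}, Z ((δ/r) • ξ) := by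
      refine setIntegral_congr_fun hms fun ξ hξ => ?_
      have hξ2 : ‖ξ‖ ≤ 7/16 := hξ.2
      show |Z ((δ/r) • ξ)| = Z ((δ/r) • ξ)
      rw [abs_of_nonneg]
      rw [hZe _ (hin ξ hξ2)]
      exact hnn _ (ball_subset_closedBall (hsub (hmem' _ (hin ξ hξ2))))
    rw [habs]
    refine annulus_bound hz (5/16) (7/16) (max Cε 0) (by norm_num) (by norm_num) ?_ ?_ (le_max_right _ _)
    · intro y hy
      have hy2 : ‖y‖ ≤ 7/16 := by simpa using (mem_ball.1 hy).le
      have h1 := lapl_comp_affine Z 0 (δ/r) 0 hR.ne' y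
      simp only [zero_add, add_zero] at h1
      rw [h1]
      have h2 := hlap _ (hin y hy2)
      have h3 := (hVb _ (hsub (hmem' _ (hin y hy2)))).1
      have : 0 ≤ - lapl Z ((δ/r) • y) := by rw [h2]; positivity
      nlinarith [sq_nonneg (δ/r)]
    · intro y hy
      show Z ((δ/r) • y) ≤ _
      rw [hval y (by rw [hy]; norm_num)]
      exact (hC y hy).trans (le_max_left _ _)

theorem u0_contDiff {v : ℕ → E2 → ℝ} {R : ℕ → ℝ} {u₀ : E2 → ℝ} (hRt : Tendsto R atTop atTop)
    (hv : ∀ i, ContDiffOn ℝ 2 (v i) (ball 0 (R i)))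
    (hconv : ∀ K : Set E2, IsCompact K →
      TendstoUniformlyOn (fun i θ => v i θ) u₀ atTop K ∧
      TendstoUniformlyOn (fun i θ => fderiv ℝ (v i) θ) (fderiv ℝ u₀) atTop K ∧
      TendstoUniformlyOn (fun i θ => fderiv ℝ (fun w => fderiv ℝ (v i) w) θ)
        (fderiv ℝ (fun w => fderiv ℝ u₀ w)) atTop K) : ContDiff ℝ 2 u₀ := by
  have key : ∀ x : E2, HasFDerivAt u₀ (fderiv ℝ u₀ x) x ∧ HasFDerivAt (fderiv ℝ u₀) (fderiv ℝ (fderiv ℝ u₀) x) x ∧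
      ContinuousAt (fderiv ℝ (fderiv ℝ u₀)) x := by
    intro x
    set k := ‖x‖ + 1
    have hx : x ∈ ball (0:E2) k := by simp [k]
    obtain ⟨N, hN⟩ := eventually_atTop.1 (hRt.eventually_ge_atTop k)
    have hC : ∀ i, ∀ y ∈ ball (0:E2) k, ContDiffAt ℝ 2 (v (i + N)) y := fun i y hy =>
      (hv (i+N)).contDiffAt (isOpen_ball.mem_nhds (ball_subset_ball (hN _ (by omega)) hy))
    obtain ⟨c0, c1, c2⟩ := hconv (closedBall 0 k) (isCompact_closedBall _ _)
    have hs := tendsto_add_atTop_nat N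
    have sh : ∀ {F : Type} [UniformSpace F] {f : ℕ → E2 → F} {g : E2 → F}, TendstoUniformlyOn f g atTop (closedBall 0 k) →
        TendstoUniformlyOn (fun i => f (i + N)) g atTop (ball 0 k) := by
      intro F _ f g h w hw
      filter_upwards [hs.eventually (h w hw)] with i hi y hy
      exact hi y (ball_subset_closedBall hy)
    have d0 := sh c0
    have d1 := sh c1
    have d2 := sh c2
    have hd2 : ∀ i, ∀ y ∈ ball (0:E2) k, ContDiffAt ℝ 1 (fderiv ℝ (v (i + N))) y := fun i y hy => (hC i y hy).fderiv_right (by norm_num)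
    refine ⟨?_, ?_, ?_⟩
    · exact hasFDerivAt_of_tendstoUniformlyOn isOpen_ball d1 (fun i y hy => ((hC i y hy).differentiableAt (by norm_num)).hasFDerivAt)
        (fun y hy => d0.tendsto_at hy) hx
    · exact hasFDerivAt_of_tendstoUniformlyOn isOpen_ball d2 (fun i y hy => ((hd2 i y hy).differentiableAt (by norm_num)).hasFDerivAt)
        (fun y hy => d1.tendsto_at hy) hx
    · refine (d2.continuousOn (Frequently.of_forall fun i => ?_)).continuousAt (isOpen_ball.mem_nhds hx)
      intro y hy
      exact ((hd2 i y hy).fderiv_right (m := 0) (by norm_num)).continuousAt.continuousWithinAt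
  have h2 : ContDiff ℝ 1 (fderiv ℝ u₀) := contDiff_one_iff_fderiv.2 ⟨fun x => (key x).2.1.differentiableAt,
    continuous_iff_continuousAt.2 fun x => (key x).2.2⟩
  have : ContDiff ℝ (1 + 1) u₀ := contDiff_succ_iff_fderiv.2 ⟨fun x => (key x).1.differentiableAt, by simp, h2⟩
  norm_num at this
  exact this

theorem lapl_conv {v : ℕ → E2 → ℝ} {R : ℕ → ℝ} {u₀ : E2 → ℝ} (hRt : Tendsto R atTop atTop)
    (hv : ∀ i, ContDiffOn ℝ 2 (v i) (ball 0 (R i))) (hu : ContDiff ℝ 2 u₀) (k : ℝ)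
    (h : TendstoUniformlyOn (fun i θ => fderiv ℝ (fun w => fderiv ℝ (v i) w) θ)
        (fderiv ℝ (fun w => fderiv ℝ u₀ w)) atTop (closedBall 0 k)) :
    TendstoUniformlyOn (fun i y => - lapl (v i) y) (fun y => - lapl u₀ y) atTop (closedBall 0 k) := by
  rw [Metric.tendstoUniformlyOn_iff]
  intro e he
  have hm : {p : (E2 →L[ℝ] E2 →L[ℝ] ℝ) × (E2 →L[ℝ] E2 →L[ℝ] ℝ) | dist p.1 p.2 < e/3} ∈ uniformity (E2 →L[ℝ] E2 →L[ℝ] ℝ) :=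
    Metric.dist_mem_uniformity (α := E2 →L[ℝ] E2 →L[ℝ] ℝ) (ε := e/3) (by positivity)
  filter_upwards [h _ hm, hRt.eventually_gt_atTop k] with i hi hik y hy
  have hC : ContDiffAt ℝ 2 (v i) y := (hv i).contDiffAt (isOpen_ball.mem_nhds (by
    simp only [mem_closedBall, mem_ball, dist_zero_right] at hy ⊢; linarith))
  have h1 : dist (fderiv ℝ (fderiv ℝ u₀) y) (fderiv ℝ (fderiv ℝ (v i)) y) < e/3 := hi y hy
  have h2 : ∀ m : Fin 2, |pd m (pd m u₀) y - pd m (pd m (v i)) y| ≤ e/3 := by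
    intro m
    rw [pd_pd_eq hu.contDiffAt, pd_pd_eq hC]
    have := ((fderiv ℝ (fderiv ℝ u₀) y - fderiv ℝ (fderiv ℝ (v i)) y)).le_opNorm₂ (EuclideanSpace.single m 1) (EuclideanSpace.single m 1)
    simp only [EuclideanSpace.norm_single, norm_one, mul_one] at this
    refine le_trans this ?_
    exact (dist_eq_norm (E := E2 →L[ℝ] E2 →L[ℝ] ℝ) (fderiv ℝ (fderiv ℝ u₀) y) (fderiv ℝ (fderiv ℝ (v i)) y)).symm.le.trans h1.le
  have e0 := h2 0
  have e1 := h2 1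
  rw [dist_eq_norm, Real.norm_eq_abs, abs_lt]
  rw [abs_le] at e0 e1
  unfold lapl
  constructor <;> linarith [e0.1, e0.2, e1.1, e1.2]


theorem stmt12
    (b A s C₀ : ℝ) (hs1 : 1/2 < s) (hs2 : s ≤ 1)
    (V u : ℕ → E2 → ℝ) (x_ : ℕ → E2) (δ r : ℕ → ℝ) (v : ℕ → E2 → ℝ)
    (hu : ∀ i, ContDiffOn ℝ 2 (u i) (closedBall (0:E2) 1))
    (hVb : ∀ i, ∀ x ∈ ball (0:E2) 1, 0 ≤ V i x ∧ V i x ≤ b)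
    (hVhol : ∀ i, ∀ x ∈ ball (0:E2) 1, ∀ y ∈ ball (0:E2) 1, |V i x - V i y| ≤ A * ‖x - y‖ ^ s)
    (hpde : ∀ i, ∀ x ∈ ball (0:E2) 1, -(lapl (u i) x) = V i x * Real.exp (u i x))
    (hbc : ∀ i, ∀ x ∈ sphere (0:E2) 1, u i x = 0)
    (hint : ∀ i, (∫ y in ball (0:E2) 1, Real.exp (u i y)) ≤ C₀)
    (hxmem : ∀ i, x_ i ∈ ball (0:E2) 1)
    (hmax : ∀ i, ∀ y ∈ closedBall (0:E2) 1, u i y ≤ u i (x_ i))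
    (hblow : Tendsto (fun i => u i (x_ i)) atTop atTop)
    (hδ : ∀ i, δ i = Metric.infDist (x_ i) (sphere (0:E2) 1))
    (hδ0 : Tendsto δ atTop (nhds 0))
    (hr : ∀ i, r i = Real.exp (-(u i (x_ i)) / 2))
    (hrδ : Tendsto (fun i => r i / δ i) atTop (nhds 0))
    (hmass : Tendsto (fun i => ∫ y in ball (x_ i) (δ i / 2), V i y * Real.exp (u i y)) atTop
      (nhds (8 * Real.pi)))
    (hbound : ∀ ε : ℝ, 0 < ε → ε < 1 → ∃ Cε : ℝ, ∀ i, ∀ y : E2, ‖y‖ = ε →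
      u i (x_ i + δ i • y) ≤ Cε)
    (hv : ∀ i θ, v i θ = u i (x_ i + r i • θ) - u i (x_ i))
    (u₀ : E2 → ℝ) (V₀ : ℝ) (hV₀pos : 0 < V₀)
    (hV₀ : Tendsto (fun i => V i (x_ i)) atTop (nhds V₀))
    (hu₀ : ∀ x : E2, -(lapl u₀ x) = V₀ * Real.exp (u₀ x))
    (hconv : ∀ K : Set E2, IsCompact K →
      TendstoUniformlyOn (fun i θ => v i θ) u₀ atTop K ∧
      TendstoUniformlyOn (fun i θ => fderiv ℝ (v i) θ) (fderiv ℝ u₀) atTop K ∧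
      TendstoUniformlyOn (fun i θ => fderiv ℝ (fun w => fderiv ℝ (v i) w) θ)
        (fderiv ℝ (fun w => fderiv ℝ u₀ w)) atTop K) :
    ∀ ε : ℝ, 0 < ε → ∀ ε' : ℝ, ε' ∈ Set.Ioo (0:ℝ) (1/4) →
      ∃ k > (0:ℝ), ∃ i₀ : ℕ, ∃ C > (0:ℝ), ∀ i ≥ i₀, ∀ j : Fin 2, ∀ θ : E2,
        k ≤ ‖θ‖ → ‖θ‖ ≤ δ i * ε' / r i →
        |pd j (v i) θ - pd j u₀ θ| ≤ ε / ‖θ‖ + C * (r i / δ i) := by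
  have hrp : ∀ i, 0 < r i := fun i => by rw [hr i]; exact Real.exp_pos _
  have hδp : ∀ i, 0 < δ i := fun i => by rw [hδ i]; exact infDist_sphere_pos (hxmem i)
  have hδ1 : ∀ i, δ i ≤ 1 - ‖x_ i‖ := fun i => by rw [hδ i]; exact infDist_sphere_le (hxmem i)
  have hsub := fun i => ball_sub_unit (hδ1 i)
  have hRp : ∀ i, 0 < δ i / r i := fun i => div_pos (hδp i) (hrp i)
  have hRt : Tendsto (fun i => δ i / r i) atTop atTop := by
    have h1 : Tendsto (fun i => r i / δ i) atTop (nhdsWithin 0 (Set.Ioi 0)) :=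
      tendsto_nhdsWithin_iff.2 ⟨hrδ, Eventually.of_forall fun i => div_pos (hrp i) (hδp i)⟩
    have h2 := h1.inv_tendsto_nhdsGT_zero
    refine h2.congr fun i => ?_
    simp
  have hb : V₀ ≤ b := le_of_tendsto hV₀ (Eventually.of_forall fun i => (hVb i _ (hxmem i)).2)
  have hvC : ∀ i, ContDiffOn ℝ 2 (v i) (ball 0 (δ i / r i)) := by
    intro i
    have e : v i = fun θ => u i (x_ i + r i • θ) - u i (x_ i) := funext fun θ => hv i θ
    rw [e]
    refine ContDiffOn.sub ?_ contDiffOn_const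
    refine (hu i).comp (t := closedBall (0:E2) 1) (by fun_prop) ?_
    intro y hy
    exact ball_subset_closedBall (hsub i (affine_mem (hrp i) hy))
  have hu₀C := u0_contDiff hRt hvC hconv
  have hu₀le : ∀ x, u₀ x ≤ 0 := by
    intro x
    have h1 := (hconv {x} isCompact_singleton).1.tendsto_at (Set.mem_singleton x)
    refine le_of_tendsto h1 ?_
    filter_upwards [hRt.eventually_gt_atTop ‖x‖] with i hi
    rw [hv]
    have := hmax i _ (ball_subset_closedBall (hsub i (affine_mem (x := x_ i) (y := x) (hrp i) (by simpa using hi))))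
    linarith
  -- eventual properties
  have hAδ : Tendsto (fun i => |A| * δ i ^ s) atTop (nhds 0) := by
    have := (hδ0.rpow_const (p := s) (Or.inr (by linarith))).const_mul |A|
    rwa [Real.zero_rpow (by linarith), mul_zero] at this
  have hVl : ∀ᶠ i in atTop, ∀ y ∈ ball (x_ i) (δ i), V₀ / 2 ≤ V i y := by
    filter_upwards [hAδ.eventually (gt_mem_nhds (show 0 < V₀ / 4 by positivity)),
      hV₀.eventually (lt_mem_nhds (show 3 * V₀ / 4 < V₀ by linarith))] with i h1 h2 y hy
    have h3 := hVhol i _ (hxmem i) y (hsub i hy)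
    have h4 : A * ‖x_ i - y‖ ^ s ≤ |A| * δ i ^ s := by
      have hn : ‖x_ i - y‖ ≤ δ i := by
        rw [← dist_eq_norm, dist_comm]; exact (mem_ball.1 hy).le
      have : ‖x_ i - y‖ ^ s ≤ δ i ^ s := Real.rpow_le_rpow (norm_nonneg _) hn (by linarith)
      exact mul_le_mul (le_abs_self A) this (Real.rpow_nonneg (norm_nonneg _) _) (abs_nonneg _)
    have h5 := (abs_le.1 (h3.trans h4)).2
    linarith
  have hpi := Real.pi_pos
  have hev := (hVl.and ((hmass.eventually (lt_mem_nhds (show 0 < 8 * Real.pi by positivity))).and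
    (hmass.eventually (gt_mem_nhds (show 8 * Real.pi < 9 * Real.pi by linarith)))))
  obtain ⟨N, hN⟩ := eventually_atTop.1 hev
  obtain ⟨Cε, hCε⟩ := hbound (5/16) (by norm_num) (by norm_num)
  have hS := fun n : ℕ => single_index (hu (n+N)) (hVb (n+N)) hV₀pos (hpde (n+N)) (hbc (n+N)) (hδp (n+N)) (hδ1 (n+N)) (hrp (n+N))
    (hN (n+N) (by omega)).1 (hCε (n+N)) (Integrable.of_integral_ne_zero (hN (n+N) (by omega)).2.1.ne')
  choose Z hZ hZe H1 H2 H3 using hS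
  have hshift := tendsto_add_atTop_nat N
  -- comparison of the extension with the rescaled function
  have hZv : ∀ n, ∀ y ∈ ball (0:E2) (15/32*(δ (n+N) / r (n+N))),
      (∀ j, pd j (Z n) y = pd j (v (n+N)) y) ∧ lapl (Z n) y = lapl (v (n+N)) y := by
    intro n y hy
    have e1 : Z n =ᶠ[nhds y] fun y => u (n+N) (x_ (n+N) + r (n+N) • y) + 0 := by
      filter_upwards [isOpen_ball.mem_nhds hy] with w hw
      rw [hZe n w hw, add_zero]
    have e2 : v (n+N) = fun y => u (n+N) (x_ (n+N) + r (n+N) • y) + -(u (n+N) (x_ (n+N))) := by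
      ext w; rw [hv]; ring
    refine ⟨fun j => ?_, ?_⟩
    · rw [(pd_congr e1 j).eq_of_nhds, e2, pd_comp_affine _ _ _ _ (hrp _).ne', pd_comp_affine _ _ _ _ (hrp _).ne']
    · rw [(lapl_congr e1).eq_of_nhds, e2, lapl_comp_affine _ _ _ _ (hrp _).ne', lapl_comp_affine _ _ _ _ (hrp _).ne']
  have hRt' : Tendsto (fun n => δ (n+N) / r (n+N)) atTop atTop := hRt.comp hshift
  have hc : ∀ k : ℝ, TendstoUniformlyOn (fun n y => - lapl (Z n) y) (fun y => V₀ * Real.exp (u₀ y)) atTop (closedBall 0 k) := by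
    intro k
    have h1 := lapl_conv hRt hvC hu₀C k (hconv _ (isCompact_closedBall 0 k)).2.2
    simp only [hu₀] at h1
    have h2 : TendstoUniformlyOn (fun n y => - lapl (v (n+N)) y) (fun y => V₀ * Real.exp (u₀ y)) atTop (closedBall 0 k) := by
      intro w hw
      exact hshift.eventually (h1 w hw)
    refine h2.congr ?_
    filter_upwards [hRt'.eventually_gt_atTop (32/15*k)] with n hn y hy
    simp only [mem_closedBall, dist_zero_right] at hy
    show - lapl (v (n+N)) y = - lapl (Z n) y
    rw [(hZv n y (by simp only [mem_ball, dist_zero_right]; linarith)).2]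
  have hpd : ∀ j x, Tendsto (fun n => pd j (Z n) x) atTop (nhds (pd j u₀ x)) := by
    intro j x
    have h1 := (hconv {x} isCompact_singleton).2.1.tendsto_at (Set.mem_singleton x)
    have h2 : Tendsto (fun i => pd j (v i) x) atTop (nhds (pd j u₀ x)) :=
      ((ContinuousLinearMap.apply ℝ ℝ (EuclideanSpace.single j 1 : E2)).continuous.tendsto _).comp h1
    refine (h2.comp hshift).congr' ?_
    filter_upwards [hRt'.eventually_gt_atTop (32/15*‖x‖)] with n hn
    exact ((hZv n x (by simp only [mem_ball, dist_zero_right]; linarith)).1 j).symm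
  have hmain := abstract_thm (Z := Z) (R := fun n => δ (n+N) / r (n+N)) (a := fun n => V₀/2*r (n+N)^2) (Λ := 2*b/V₀) (B := 9 * Real.pi)
    hZ (fun n => hRp _) hRt' (fun n => by have := hrp (n+N); positivity) (div_pos (by linarith) hV₀pos) H1
    (fun η hη => by
      filter_upwards [hshift.eventually (hmass.eventually (gt_mem_nhds (show 8 * Real.pi < 8 * Real.pi + η by linarith)))] with n hn
      exact (H2 n).trans hn.le)
    (fun n => (H2 n).trans (hN (n+N) (by omega)).2.2.le) H3 hV₀pos hu₀C hu₀ hu₀le hc hpd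
  intro ε hε ε' hε'
  obtain ⟨k, hk, M, C, hC, h⟩ := hmain ε hε
  refine ⟨k, hk, M + N, C, hC, ?_⟩
  intro i hi j θ hθ1 hθ2
  obtain ⟨n, rfl⟩ : ∃ n, i = n + N := ⟨i - N, by omega⟩
  have hRn := hRp (n+N)
  have hθ3 : ‖θ‖ ≤ δ (n+N) / r (n+N) / 4 := by
    refine hθ2.trans ?_
    have : δ (n+N) * ε' / r (n+N) = δ (n+N) / r (n+N) * ε' := by ring
    rw [this]
    nlinarith [hε'.2]
  have h1 := h n (by omega) j θ hθ1 hθ3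
  rw [(hZv n θ (by simp only [mem_ball, dist_zero_right]; linarith)).1 j] at h1
  refine h1.trans (le_of_eq ?_)
  rw [div_div_eq_mul_div, mul_div_assoc]
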